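/- If G is a planar triangulation on n vertices, then τ(G) = n − 2. -/

import Mathlib

open SimpleGraph

variable {V : Type*}

/-- A triangle transversal of `G`: a set of edges of `G` meeting every triangle of `G`
(so that its removal leaves a triangle-free graph). -/
def IsTriangleTransversal (G : SimpleGraph V) (X : Finset (Sym2 V)) : Prop :=
  ↑X ⊆ G.edgeSet ∧
    ∀ t : Finset V, G.IsNClique 3 t → ∃ e ∈ X, ∀ v ∈ e, v ∈ t

/-- A triangle packing of `G`: a set of pairwise edge-disjoint triangles of `G`. -/
def IsTrianglePacking (G : SimpleGraph V) (Y : Finset (Finset V)) : Prop :=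
  (∀ t ∈ Y, G.IsNClique 3 t) ∧
    ∀ s ∈ Y, ∀ t ∈ Y, s ≠ t →
      ∀ e ∈ G.edgeSet, ¬ ((∀ v ∈ e, v ∈ s) ∧ (∀ v ∈ e, v ∈ t))

/-- `tau G` is the minimum size of a triangle transversal of `G`. -/
noncomputable def tau (G : SimpleGraph V) : ℕ :=
  sInf {n | ∃ X : Finset (Sym2 V), IsTriangleTransversal G X ∧ X.card = n}

/-- `nu G` is the maximum size of a triangle packing of `G`. -/
noncomputable def nu (G : SimpleGraph V) : ℕ :=
  sSup {n | ∃ Y : Finset (Finset V), IsTrianglePacking G Y ∧ Y.card = n}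

/-- A drawing of the graph `G` in the plane (identified with `ℂ`): vertices are mapped to
distinct points, each edge is realized by a simple continuous arc joining the images of its
endpoints, arcs of distinct edges meet only in common endpoints, and no arc passes through
the image of any other vertex. -/
structure PlaneEmbedding (G : SimpleGraph V) where
  vtx : V → ℂ
  arc : V → V → Set ℂ
  vtx_inj : Function.Injective vtx
  arc_symm : ∀ u v : V, arc u v = arc v u
  arc_curve : ∀ ⦃u v : V⦄, G.Adj u v → ∃ γ : ℝ → ℂ,
    ContinuousOn γ (Set.Icc 0 1) ∧ Set.InjOn γ (Set.Icc 0 1) ∧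
    γ 0 = vtx u ∧ γ 1 = vtx v ∧ arc u v = γ '' Set.Icc 0 1
  arc_inter : ∀ ⦃u v x y : V⦄, G.Adj u v → G.Adj x y → s(u, v) ≠ s(x, y) →
    arc u v ∩ arc x y ⊆ ({vtx u, vtx v} : Set ℂ) ∩ ({vtx x, vtx y} : Set ℂ)
  arc_vtx : ∀ ⦃u v : V⦄, G.Adj u v → ∀ w : V, vtx w ∈ arc u v → w = u ∨ w = v

/-- The set of points of the plane used by a plane embedding. -/
def PlaneEmbedding.drawing {G : SimpleGraph V} (E : PlaneEmbedding G) : Set ℂ :=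
  Set.range E.vtx ∪ ⋃ (u : V) (v : V) (_ : G.Adj u v), E.arc u v

/-- A graph is planar if it admits a plane embedding. -/
def PlanarGraph (G : SimpleGraph V) : Prop := Nonempty (PlaneEmbedding G)

/-- A maximal planar graph (planar triangulation): a planar graph such that adding any
edge between nonadjacent vertices destroys planarity. -/
def MaximalPlanar (G : SimpleGraph V) : Prop :=
  PlanarGraph G ∧ ∀ u v : V, u ≠ v → ¬ G.Adj u v →
    ¬ PlanarGraph (G ⊔ SimpleGraph.fromEdgeSet {s(u, v)})

/-!
A plane embedding can be replaced by a polygonal drawing whose vertices and corners have distinct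
real parts. For such a drawing, counting modulo two the crossings of an edge set with vertical rays
shows that the even edge sets are exactly the boundaries of the sets of faces.

If two vertices on the boundary of a face were not adjacent, they could be joined inside the face.
So maximality makes the vertices of every face a clique. No face of a drawing of `K₄` has all four
vertices on its boundary, hence every face is a triangle. By Euler's formula there are `2 (n - 2)`
faces. An edge lies on only two of them, so a transversal has at least `n - 2` edges.

Conversely, the dual graph is cubic and has no bridge, because an even edge set of a simple graph
has at least three edges. By Petersen's theorem it has a perfect matching, that is, there is a set
`X` of `n - 2` edges containing exactly one edge of every face. An arbitrary triangle is the
boundary of a set `A` of faces: exactly its edges have an odd number of sides in `A`. Counting the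
sides in `A` of all edges gives `3 |A| ≡ 3` modulo two, so `|A|` is odd. Counting those of the edges
in `X` shows that the number of edges of the triangle in `X` has the parity of `|A|`, so the
triangle meets `X`.
-/

open Topology Filter Function

/-- The indicator of a proposition, with values in the coefficient field `ZMod 2` of all chains. -/
noncomputable def ind (P : Prop) : ZMod 2 := by classical exact if P then 1 else 0

theorem ind_true {P : Prop} (h : P) : ind P = 1 := by simp [ind, h]

theorem ind_false {P : Prop} (h : ¬ P) : ind P = 0 := by simp [ind, h]

theorem ind_ne_zero_iff {P : Prop} : ind P ≠ 0 ↔ P := by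
  by_cases h : P <;> simp [ind, h]

theorem sum_ind {α : Type*} [Fintype α] (P : α → Prop) [DecidablePred P] :
    ∑ a, ind (P a) = ((Finset.univ.filter P).card : ZMod 2) := by
  rw [← Finset.sum_boole]
  refine Finset.sum_congr rfl fun a _ => ?_
  by_cases h : P a
  · rw [ind_true h, if_pos h]
  · rw [ind_false h, if_neg h]

/-! ### Cycles modulo two -/

/-- A cycle modulo two: a set of edges, given by its indicator, with evenly many edges at every
vertex. -/
def IsEvenChain (G : SimpleGraph V) [Fintype G.edgeSet] (x : G.edgeSet → ZMod 2) : Prop :=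
  ∀ v, ∑ e, x e * ind (v ∈ e.1) = 0

section EvenChain

variable {G : SimpleGraph V} [Fintype G.edgeSet]

theorem IsEvenChain.exists_next {x : G.edgeSet → ZMod 2} (hx : IsEvenChain G x) {a b : V}
    (hab : G.Adj a b) (h : x ⟨s(a, b), hab⟩ ≠ 0) :
    ∃ c, ∃ hbc : G.Adj b c, c ≠ a ∧ x ⟨s(b, c), hbc⟩ ≠ 0 := by
  by_contra! hcon
  have hb := hx b
  rw [Finset.sum_eq_single ⟨s(a, b), hab⟩] at hb
  · rw [ind_true (by simp), mul_one] at hb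
    exact h hb
  · rintro ⟨e, he⟩ - hne
    by_cases hbe : b ∈ e
    · obtain ⟨c, rfl⟩ := Sym2.mem_iff_exists.1 hbe
      have hca : c ≠ a := by
        rintro rfl
        exact hne (Subtype.ext Sym2.eq_swap)
      rw [hcon c he hca, zero_mul]
    · rw [ind_false hbe, mul_zero]
  · simp

theorem IsEvenChain.exists_path {x : G.edgeSet → ZMod 2} (hx : IsEvenChain G x)
    (h : ∃ e, x e ≠ 0) : ∃ a b c d, ∃ hab : G.Adj a b, ∃ hbc : G.Adj b c, ∃ hcd : G.Adj c d,
      c ≠ a ∧ d ≠ b ∧ x ⟨s(a, b), hab⟩ ≠ 0 ∧ x ⟨s(b, c), hbc⟩ ≠ 0 ∧ x ⟨s(c, d), hcd⟩ ≠ 0 := by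
  obtain ⟨⟨⟨a, b⟩, hab⟩, h1⟩ := h
  obtain ⟨c, hbc, hca, h2⟩ := hx.exists_next hab h1
  obtain ⟨d, hcd, hdb, h3⟩ := hx.exists_next hbc h2
  exact ⟨a, b, c, d, hab, hbc, hcd, hca, hdb, h1, h2, h3⟩

theorem IsEvenChain.three_le_card {x : G.edgeSet → ZMod 2} (hx : IsEvenChain G x)
    (h : ∃ e, x e ≠ 0) {T : Finset G.edgeSet} (hT : ∀ e, x e ≠ 0 → e ∈ T) : 3 ≤ T.card := by
  classical
  obtain ⟨a, b, c, d, hab, hbc, hcd, hca, hdb, h1, h2, h3⟩ := hx.exists_path h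
  have hsub : ({⟨s(a, b), hab⟩, ⟨s(b, c), hbc⟩, ⟨s(c, d), hcd⟩} : Finset G.edgeSet) ⊆ T := by
    simp only [Finset.insert_subset_iff, Finset.singleton_subset_iff]
    exact ⟨hT _ h1, hT _ h2, hT _ h3⟩
  refine le_of_eq_of_le ?_ (Finset.card_le_card hsub)
  rw [eq_comm, Finset.card_eq_three]
  refine ⟨_, _, _, ?_, ?_, ?_, rfl⟩
  all_goals
    simp only [ne_eq, Subtype.ext_iff, Sym2.eq_iff]
    have := hab.ne; have := hbc.ne; have := hcd.ne
    grind

theorem isEvenChain_triangle {t : Finset V} (ht : G.IsNClique 3 t) :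
    IsEvenChain G fun e => ind (∀ v ∈ e.1, v ∈ t) := by
  classical
  intro v
  beta_reduce
  by_cases hv : v ∈ t
  · obtain ⟨b, c, hbc, hbct⟩ := Finset.card_eq_two.1
      (show (t.erase v).card = 2 by rw [Finset.card_erase_of_mem hv, ht.card_eq])
    have hb : b ≠ v ∧ b ∈ t := Finset.mem_erase.1 (by simp [hbct])
    have hc : c ≠ v ∧ c ∈ t := Finset.mem_erase.1 (by simp [hbct])
    have hvb : G.Adj v b := ht.isClique hv hb.2 hb.1.symm
    have hvc : G.Adj v c := ht.isClique hv hc.2 hc.1.symm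
    rw [Finset.sum_eq_add_of_mem (⟨s(v, b), hvb⟩ : G.edgeSet) ⟨s(v, c), hvc⟩ (Finset.mem_univ _)
      (Finset.mem_univ _)]
    · simp [ind_true, hv, hb.2, hc.2, CharTwo.add_self_eq_zero]
    · simp only [ne_eq, Subtype.ext_iff, Sym2.congr_right, hbc, not_false_eq_true]
    · rintro ⟨e, he⟩ - ⟨hneb, hnec⟩
      by_cases hve : v ∈ e
      · obtain ⟨d, rfl⟩ := Sym2.mem_iff_exists.1 hve
        have hdt : d ∉ t := fun hd => by
          have : d ∈ t.erase v := Finset.mem_erase.2 ⟨(G.ne_of_adj he).symm, hd⟩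
          simp only [hbct, Finset.mem_insert, Finset.mem_singleton] at this
          rcases this with rfl | rfl <;> contradiction
        rw [ind_false (fun h => hdt (h d (by simp))), zero_mul]
      · rw [ind_false hve, mul_zero]
  · refine Finset.sum_eq_zero fun e _ => ?_
    by_cases hve : v ∈ e.1
    · rw [ind_false (fun h => hv (h v hve)), zero_mul]
    · rw [ind_false hve, mul_zero]

end EvenChain

theorem card_edges_of_isNClique_three {G : SimpleGraph V} {t : Finset V} (ht : G.IsNClique 3 t)
    {T : Finset G.edgeSet} (hT : ∀ e, e ∈ T ↔ ∀ v ∈ e.1, v ∈ t) : T.card = 3 := by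
  classical
  obtain ⟨a, b, c, hab, hac, hbc, rfl⟩ := is3Clique_iff.1 ht
  rw [Finset.card_eq_three]
  refine ⟨⟨s(a, b), hab⟩, ⟨s(a, c), hac⟩, ⟨s(b, c), hbc⟩, ?_, ?_, ?_, Finset.ext ?_⟩
  any_goals
    simp only [ne_eq, Subtype.ext_iff, Sym2.eq_iff]
    have := hab.ne; have := hac.ne; have := hbc.ne
    grind
  rintro ⟨⟨u, v⟩, he⟩
  have := G.ne_of_adj he
  simp only [hT, Sym2.mem_iff, Finset.mem_insert, Finset.mem_singleton, Subtype.ext_iff,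
    Sym2.eq_iff, forall_eq_or_imp, forall_eq]
  grind

/-! ### Systems of faces -/

/-- Combinatorial data on the faces of a plane drawing of `G`, as far as they matter here: the
faces on the two sides of an edge, the vertices on the boundary of a face, and the facts of plane
topology on them, which are stated for chains modulo two. The names `left` and `right` do not
refer to an orientation; the two sides of a bridge are the same face. -/
structure FaceSystem (G : SimpleGraph V) [Fintype G.edgeSet] (F : Type*) where
  left : G.edgeSet → F
  right : G.edgeSet → F
  inc : V → F → Prop
  const_of_no_jump : ∀ φ : F → ZMod 2, (∀ e, φ (left e) = φ (right e)) → ∀ f g, φ f = φ g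
  exists_potential : ∀ x, IsEvenChain G x →
    ∃ φ : F → ZMod 2, (∀ e, φ (left e) + φ (right e) = x e) ∧
      ∀ v, (∀ e : G.edgeSet, v ∈ e.1 → x e = 0) → ∀ f g, inc v f → inc v g → φ f = φ g
  isEvenChain_sum_sides : ∀ φ : F → ZMod 2, IsEvenChain G fun e => φ (left e) + φ (right e)
  inc_left : ∀ v (e : G.edgeSet), v ∈ e.1 → inc v (left e)
  inc_right : ∀ v (e : G.edgeSet), v ∈ e.1 → inc v (right e)
  exists_inc : ∀ v, ∃ f, inc v f

namespace FaceSystem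

variable {G : SimpleGraph V} [Fintype G.edgeSet] {F : Type*} (Φ : FaceSystem G F)

/-- The jumps of a function of the faces across the edges. -/
def jump : (F → ZMod 2) →ₗ[ZMod 2] (G.edgeSet → ZMod 2) :=
  LinearMap.funLeft _ _ Φ.left + LinearMap.funLeft _ _ Φ.right

theorem jump_apply (φ : F → ZMod 2) (e : G.edgeSet) :
    Φ.jump φ e = φ (Φ.left e) + φ (Φ.right e) := rfl

theorem isEvenChain_jump (φ : F → ZMod 2) : IsEvenChain G (Φ.jump φ) := Φ.isEvenChain_sum_sides φ

theorem eq_of_jump_eq_zero {φ : F → ZMod 2} (h : ∀ e, Φ.jump φ e = 0) (f g : F) : φ f = φ g :=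
  Φ.const_of_no_jump φ (fun e => CharTwo.add_eq_zero.1 (h e)) f g

/-- The boundary of a face as a chain modulo two. It omits the bridges, which have the face on both
sides. -/
noncomputable def contour (f : F) : G.edgeSet → ZMod 2 := Φ.jump fun g => ind (g = f)

theorem isEvenChain_contour (f : F) : IsEvenChain G (Φ.contour f) := Φ.isEvenChain_jump _

theorem contour_ne_zero_iff {f : F} {e : G.edgeSet} :
    Φ.contour f e ≠ 0 ↔ (Φ.left e = f ∨ Φ.right e = f) ∧ Φ.left e ≠ Φ.right e := by
  rw [contour, jump_apply]
  constructor
  · refine fun h => ⟨?_, fun heq => h (by rw [heq, CharTwo.add_self_eq_zero])⟩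
    by_contra! hcon
    exact h (by rw [ind_false hcon.1, ind_false hcon.2, add_zero])
  · rintro ⟨rfl | rfl, hne⟩
    · simp [ind_true, ind_false hne.symm]
    · simp [ind_true, ind_false hne]

theorem inc_of_contour_ne_zero {f : F} {e : G.edgeSet} (h : Φ.contour f e ≠ 0) {v : V}
    (hv : v ∈ e.1) : Φ.inc v f := by
  rcases (Φ.contour_ne_zero_iff.1 h).1 with rfl | rfl
  · exact Φ.inc_left v e hv
  · exact Φ.inc_right v e hv

theorem eq_of_contour_eq_zero {f : F} (h : ∀ e, Φ.contour f e = 0) (g : F) : g = f := by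
  have := Φ.eq_of_jump_eq_zero h g f
  rw [ind_true rfl] at this
  exact ind_ne_zero_iff.1 (this ▸ one_ne_zero)

theorem exists_three_inc {f : F} (h : ∃ e, Φ.contour f e ≠ 0) :
    ∃ a b c, G.Adj a b ∧ G.Adj b c ∧ c ≠ a ∧ Φ.inc a f ∧ Φ.inc b f ∧ Φ.inc c f := by
  obtain ⟨a, b, c, _, hab, hbc, -, hca, -, h1, h2, -⟩ := (Φ.isEvenChain_contour f).exists_path h
  exact ⟨a, b, c, hab, hbc, hca, Φ.inc_of_contour_ne_zero h1 (by simp),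
    Φ.inc_of_contour_ne_zero h2 (by simp), Φ.inc_of_contour_ne_zero h2 (by simp)⟩

end FaceSystem

/-! ### Euler's formula -/

/-- The vertex-edge incidence matrix modulo two. -/
noncomputable def incidence (G : SimpleGraph V) : Matrix V G.edgeSet (ZMod 2) :=
  Matrix.of fun v e => ind (v ∈ e.1)

theorem isEvenChain_iff_mem_ker {G : SimpleGraph V} [Fintype G.edgeSet]
    {x : G.edgeSet → ZMod 2} :
    IsEvenChain G x ↔ x ∈ LinearMap.ker (incidence G).mulVecLin := by
  simp [IsEvenChain, incidence, funext_iff, Matrix.mulVec, dotProduct, mul_comm]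

theorem incidence_transpose_mulVec [Fintype V] {G : SimpleGraph V} (c : V → ZMod 2) {a b : V}
    (h : G.Adj a b) : (incidence G).transpose.mulVec c ⟨s(a, b), h⟩ = c a + c b := by
  classical
  simp only [incidence, Matrix.mulVec, dotProduct, Matrix.transpose_apply, Matrix.of_apply]
  rw [Finset.sum_eq_add_of_mem a b (Finset.mem_univ _) (Finset.mem_univ _) h.ne]
  · rw [ind_true (by simp), ind_true (by simp), one_mul, one_mul]
  · rintro v - ⟨h1, h2⟩
    rw [ind_false (by simp [h1, h2]), zero_mul]

theorem finrank_ker_eq_one {K α W : Type*} [Field K] [Nonempty α] [AddCommGroup W]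
    [Module K W] (L : (α → K) →ₗ[K] W) (hone : L 1 = 0)
    (h : ∀ c, L c = 0 → ∀ a b, c a = c b) : Module.finrank K (LinearMap.ker L) = 1 := by
  obtain ⟨a⟩ := ‹Nonempty α›
  refine finrank_eq_one_iff'.2 ⟨⟨1, hone⟩, ?_, ?_⟩
  · intro h0
    exact one_ne_zero (congrFun (congrArg Subtype.val h0) a : (1 : K) = 0)
  · rintro ⟨c, hc⟩
    refine ⟨c a, Subtype.ext (funext fun b => ?_)⟩
    simpa using h c hc a b

theorem finrank_ker_incidence_transpose [Fintype V] {G : SimpleGraph V} (hG : G.Connected) :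
    Module.finrank (ZMod 2) (LinearMap.ker (incidence G).transpose.mulVecLin) = 1 := by
  have := hG.nonempty
  refine finrank_ker_eq_one _ (funext fun e => ?_) fun c hc u v => ?_
  · obtain ⟨⟨a, b⟩, h⟩ := e
    exact (incidence_transpose_mulVec 1 h).trans rfl
  · have hadj : ∀ a b, G.Adj a b → c a = c b := fun a b h => by
      rw [← CharTwo.add_eq_zero, ← incidence_transpose_mulVec c h]
      exact congrFun hc _
    obtain ⟨w⟩ := hG.preconnected u v
    induction w with
    | nil => rfl
    | cons h _ ih => exact (hadj _ _ h).trans ih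

namespace FaceSystem

variable {G : SimpleGraph V} [Fintype G.edgeSet] {F : Type*} (Φ : FaceSystem G F)

theorem range_jump : LinearMap.range Φ.jump = LinearMap.ker (incidence G).mulVecLin := by
  ext x
  rw [← isEvenChain_iff_mem_ker]
  constructor
  · rintro ⟨φ, rfl⟩
    exact Φ.isEvenChain_jump φ
  · intro hx
    obtain ⟨φ, hφ, -⟩ := Φ.exists_potential x hx
    exact ⟨φ, funext hφ⟩

theorem finrank_ker_jump [Nonempty F] : Module.finrank (ZMod 2) (LinearMap.ker Φ.jump) = 1 := by
  refine finrank_ker_eq_one _ (funext fun _ => ?_) fun c hc =>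
    Φ.eq_of_jump_eq_zero (congrFun hc)
  exact CharTwo.add_self_eq_zero 1

/-- The maps between functions of the faces, of the edges and of the vertices form an exact
sequence modulo two, so the formula is a count of dimensions. -/
theorem euler [Fintype V] [Fintype F] (Φ : FaceSystem G F) (hG : G.Connected) :
    Fintype.card G.edgeSet + 2 = Fintype.card V + Fintype.card F := by
  have : Nonempty F := ⟨(Φ.exists_inc hG.nonempty.some).choose⟩
  have rank_jump := Φ.jump.finrank_range_add_finrank_ker
  have rank_inc := (incidence G).mulVecLin.finrank_range_add_finrank_ker
  have rank_inc_transpose := (incidence G).transpose.mulVecLin.finrank_range_add_finrank_ker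
  have rank_transpose : Module.finrank (ZMod 2) (LinearMap.range (incidence G).transpose.mulVecLin)
      = Module.finrank (ZMod 2) (LinearMap.range (incidence G).mulVecLin) :=
    (incidence G).rank_transpose
  rw [Module.finrank_fintype_fun_eq_card] at rank_jump rank_inc rank_inc_transpose
  rw [← Φ.range_jump] at rank_inc
  rw [Φ.finrank_ker_jump] at rank_jump
  rw [finrank_ker_incidence_transpose hG] at rank_inc_transpose
  omega

end FaceSystem

/-! ### Faces of the complete graph on four vertices -/

/-- The four triangles of a complete graph on four vertices add up to zero modulo two. -/
theorem sum_ind_mem_erase_eq_zero [DecidableEq V] {t : Finset V} (ht : t.card = 4) {a b : V}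
    (hne : a ≠ b) (ha : a ∈ t) (hb : b ∈ t) :
    ∑ v ∈ t, ind (∀ w ∈ s(a, b), w ∈ t.erase v) = 0 := by
  have hind : ∀ v ∈ t, ind (∀ w ∈ s(a, b), w ∈ t.erase v) =
      if v ∈ ({a, b} : Finset V) then 0 else 1 := fun v _ => by
    simp only [Sym2.mem_iff, forall_eq_or_imp, forall_eq]
    split_ifs with h
    · exact ind_false (by grind)
    · exact ind_true (by grind)
  have hcard : (t \ {a, b}).card = 2 := by
    rw [Finset.card_sdiff_of_subset (by grind), ht, Finset.card_pair hne]
  rw [Finset.sum_congr rfl hind]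
  simp only [Finset.sum_ite, Finset.sum_const_zero, zero_add, Finset.sum_const,
    Finset.filter_notMem_eq_sdiff, hcard]
  rfl

theorem eq_zero_of_sum_eq_zero_of_subset {α M : Type*} [AddCommMonoid M] {s t : Finset α}
    {x : α → M} (hst : s ⊆ t) (hcard : t.card ≤ s.card + 1) (hs : ∀ v ∈ s, x v = 0)
    (hsum : ∑ v ∈ t, x v = 0) : ∀ v ∈ t, x v = 0 := by
  classical
  intro v hv
  by_cases hvs : v ∈ s
  · exact hs v hvs
  · have heq : insert v s = t := Finset.eq_of_subset_of_card_le
      (Finset.insert_subset hv hst) (by rwa [Finset.card_insert_of_notMem hvs])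
    rwa [← heq, Finset.sum_insert hvs, Finset.sum_eq_zero hs, add_zero] at hsum

namespace FaceSystem

variable {G : SimpleGraph V} [Fintype G.edgeSet] {F : Type*} (Φ : FaceSystem G F)

theorem exists_potential_triangle {t : Finset V} (ht : G.IsNClique 3 t) {v : V} (hv : v ∉ t) :
    ∃ φ : F → ZMod 2, (∀ e, Φ.jump φ e = ind (∀ w ∈ e.1, w ∈ t)) ∧ ∀ g, Φ.inc v g → φ g = 0 := by
  obtain ⟨f, hf⟩ := Φ.exists_inc v
  obtain ⟨φ, hφ, hconst⟩ := Φ.exists_potential _ (isEvenChain_triangle ht)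
  refine ⟨fun g => φ g + φ f, fun e => ?_, fun g hg => CharTwo.add_eq_zero.2 ?_⟩
  · rw [← hφ e, jump_apply]
    linear_combination CharTwo.add_self_eq_zero (φ f)
  · exact hconst v (fun e he => ind_false fun h => hv (h v he)) g f hg hf

/-- Each triangle has a potential vanishing on the faces around the fourth vertex. The four
potentials add up to zero, and around every face three of them vanish, hence the fourth. -/
theorem exists_not_inc {t : Finset V} (ht : t.card = 4)
    (hG : ∀ a b, G.Adj a b ↔ a ≠ b ∧ a ∈ t ∧ b ∈ t) (f : F) : ∃ v ∈ t, ¬ Φ.inc v f := by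
  classical
  by_contra! hinc
  have hcl : ∀ v ∈ t, G.IsNClique 3 (t.erase v) := fun v hv =>
    ⟨fun a ha b hb hne =>
      (hG a b).2 ⟨hne, Finset.mem_of_mem_erase ha, Finset.mem_of_mem_erase hb⟩,
      by rw [Finset.card_erase_of_mem hv, ht]⟩
  choose! ψ hjump hzero using fun v hv =>
    Φ.exists_potential_triangle (hcl v hv) (Finset.notMem_erase v t)
  have hsum : ∀ g, ∑ v ∈ t, ψ v g = 0 := fun g => by
    rw [← Finset.sum_apply, Φ.eq_of_jump_eq_zero (φ := ∑ v ∈ t, ψ v) ?_ g f, Finset.sum_apply]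
    · exact Finset.sum_eq_zero fun v hv => hzero v hv f (hinc v hv)
    · rintro ⟨⟨a, b⟩, hab⟩
      obtain ⟨hne, ha, hb⟩ := (hG a b).1 hab
      rw [map_sum, Finset.sum_apply, Finset.sum_congr rfl fun v hv => hjump v hv _]
      exact sum_ind_mem_erase_eq_zero ht hne ha hb
  have hvanish : ∀ g, ∀ v ∈ t, ψ v g = 0 := fun g => by
    by_cases hg : ∃ e, Φ.contour g e ≠ 0
    · obtain ⟨a, b, c, hab, hbc, hca, ha, hb, hc⟩ := Φ.exists_three_inc hg
      have hat := ((hG a b).1 hab).2.1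
      have hbc' := ((hG b c).1 hbc).2
      have hcard : ({a, b, c} : Finset V).card = 3 :=
        Finset.card_eq_three.2 ⟨a, b, c, hab.ne, hca.symm, hbc.ne, rfl⟩
      refine eq_zero_of_sum_eq_zero_of_subset (s := {a, b, c}) ?_ (by omega) ?_ (hsum g)
      · grind
      · simp only [Finset.mem_insert, Finset.mem_singleton, forall_eq_or_imp, forall_eq]
        exact ⟨hzero a hat g ha, hzero b hbc'.1 g hb, hzero c hbc'.2 g hc⟩
    · push Not at hg
      exact fun v hv => Φ.eq_of_contour_eq_zero hg f ▸ hzero v hv f (hinc v hv)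
  obtain ⟨v, hv⟩ : t.Nonempty := Finset.card_pos.1 (by omega)
  obtain ⟨a, b, c, hab, -, -, hmem⟩ := is3Clique_iff.1 (hcl v hv)
  have h := hjump v hv ⟨s(a, b), hab⟩
  rw [jump_apply, hvanish _ v hv, hvanish _ v hv, ind_true (by simp [hmem])] at h
  exact absurd h (by decide)

end FaceSystem

/-! ### Triangular systems of faces -/

namespace FaceSystem

variable {G : SimpleGraph V} [Fintype G.edgeSet] {F : Type*} (Φ : FaceSystem G F)

/-- The edges with a given face on one side at least. -/
noncomputable def boundary (f : F) : Finset G.edgeSet := by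
  classical exact Finset.univ.filter fun e => Φ.left e = f ∨ Φ.right e = f

theorem mem_boundary {f : F} {e : G.edgeSet} :
    e ∈ Φ.boundary f ↔ Φ.left e = f ∨ Φ.right e = f := by
  simp [boundary]

/-- The boundary vertices of every face are pairwise adjacent and there are at most three. -/
structure IsTriangular : Prop where
  adj : ∀ f u w, u ≠ w → Φ.inc u f → Φ.inc w f → G.Adj u w
  card_le : ∀ f (t : Finset V), (∀ v ∈ t, Φ.inc v f) → t.card ≤ 3

variable {Φ}

/-- A connected component of `G` induces a function of the faces without jumps, because the
vertices around a face are all in the same component. -/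
theorem IsTriangular.connected [Nonempty V] (hΦ : Φ.IsTriangular) : G.Connected := by
  refine connected_iff_exists_forall_reachable G |>.2 ⟨Classical.arbitrary V, fun w => ?_⟩
  set u := Classical.arbitrary V
  have hreach : ∀ {a b f}, Φ.inc a f → Φ.inc b f → G.Reachable a b := fun {a b f} ha hb => by
    rcases eq_or_ne a b with rfl | hne
    · exact Reachable.rfl
    · exact (hΦ.adj f a b hne ha hb).reachable
  let A (f : F) : Prop := ∃ v, Φ.inc v f ∧ G.Reachable u v
  have hA : ∀ {v f}, Φ.inc v f → (A f ↔ G.Reachable u v) := fun {v f} hv =>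
    ⟨fun ⟨_, hw, h⟩ => h.trans (hreach hw hv), fun h => ⟨v, hv, h⟩⟩
  obtain ⟨f, hf⟩ := Φ.exists_inc u
  obtain ⟨g, hg⟩ := Φ.exists_inc w
  have hconst : ind (A f) = ind (A g) := by
    refine Φ.const_of_no_jump (fun f => ind (A f)) (fun e => congrArg ind ?_) f g
    obtain ⟨⟨a, b⟩, hab⟩ := e
    have ha : a ∈ s(a, b) := by simp
    exact propext ((hA (Φ.inc_left a ⟨s(a, b), hab⟩ ha)).trans
      (hA (Φ.inc_right a ⟨s(a, b), hab⟩ ha)).symm)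
  rw [ind_true ((hA hf).2 Reachable.rfl)] at hconst
  exact (hA hg).1 (ind_ne_zero_iff.1 (hconst ▸ one_ne_zero))

theorem IsTriangular.inc_iff_mem (hΦ : Φ.IsTriangular) {f : F} {t : Finset V} (ht : t.card = 3)
    (hinc : ∀ v ∈ t, Φ.inc v f) (v : V) : Φ.inc v f ↔ v ∈ t := by
  classical
  refine ⟨fun hv => ?_, hinc v⟩
  by_contra hmem
  have := hΦ.card_le f (insert v t) (Finset.forall_mem_insert .. |>.2 ⟨hv, hinc⟩)
  rw [Finset.card_insert_of_notMem hmem] at this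
  omega

variable [Fintype V]

theorem IsTriangular.exists_contour_ne_zero (hΦ : Φ.IsTriangular) (hV : 3 ≤ Fintype.card V)
    (f : F) : ∃ e, Φ.contour f e ≠ 0 := by
  by_contra! hcon
  have hall : ∀ g, g = f := Φ.eq_of_contour_eq_zero hcon
  have hinc : ∀ v, Φ.inc v f := fun v => by
    obtain ⟨g, hg⟩ := Φ.exists_inc v
    rwa [hall g] at hg
  obtain ⟨t, -, ht⟩ := Finset.exists_subset_card_eq (s := (Finset.univ : Finset V)) (n := 3)
    (by simpa using hV)
  have hcl : G.IsNClique 3 t := ⟨fun u _ w _ hne => hΦ.adj f u w hne (hinc u) (hinc w), ht⟩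
  obtain ⟨φ, hφ, -⟩ := Φ.exists_potential _ (isEvenChain_triangle hcl)
  classical
  obtain ⟨a, b, c, hab, -, -, rfl⟩ := is3Clique_iff.1 hcl
  have hjump := hφ ⟨s(a, b), hab⟩
  rw [hall (Φ.left _), hall (Φ.right _), CharTwo.add_self_eq_zero, ind_true (by simp)] at hjump
  exact zero_ne_one hjump

/-- The contour of a face has a path `a b c d` whose vertices are on the boundary of the face; there
are three of those only, so `d = a` and the contour contains the edges of a triangle. -/
theorem IsTriangular.exists_triangle (hΦ : Φ.IsTriangular) (hV : 3 ≤ Fintype.card V) (f : F) :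
    ∃ t : Finset V, G.IsNClique 3 t ∧ (∀ v, Φ.inc v f ↔ v ∈ t) ∧
      ∀ e : G.edgeSet, Φ.contour f e ≠ 0 ↔ ∀ v ∈ e.1, v ∈ t := by
  classical
  obtain ⟨a, b, c, d, hab, hbc, hcd, hca, hdb, h1, h2, h3⟩ :=
    (Φ.isEvenChain_contour f).exists_path (hΦ.exists_contour_ne_zero hV f)
  have hinc : ∀ v, Φ.inc v f ↔ v ∈ ({a, b, c} : Finset V) := by
    refine hΦ.inc_iff_mem (Finset.card_eq_three.2 ⟨a, b, c, hab.ne, hca.symm, hbc.ne, rfl⟩) ?_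
    simp only [Finset.mem_insert, Finset.mem_singleton, forall_eq_or_imp, forall_eq]
    exact ⟨Φ.inc_of_contour_ne_zero h1 (by simp), Φ.inc_of_contour_ne_zero h1 (by simp),
      Φ.inc_of_contour_ne_zero h2 (by simp)⟩
  obtain rfl : d = a := by
    have := (hinc d).1 (Φ.inc_of_contour_ne_zero h3 (by simp))
    have := hcd.ne
    grind
  refine ⟨{d, b, c}, is3Clique_iff.2 ⟨d, b, c, hab, hcd.symm, hbc, rfl⟩, hinc, ?_⟩
  rintro ⟨⟨u, v⟩, he⟩
  refine ⟨fun h v hv => (hinc v).1 (Φ.inc_of_contour_ne_zero h hv), fun h => ?_⟩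
  have hedge : s(u, v) = s(d, b) ∨ s(u, v) = s(b, c) ∨ s(u, v) = s(c, d) := by
    have hu := h u (by simp)
    have hv := h v (by simp)
    have huv := G.ne_of_adj he
    simp only [Sym2.eq_iff]
    grind
  rcases hedge with h | h | h
  · simpa only [h] using h1
  · simpa only [h] using h2
  · simpa only [h] using h3

theorem IsTriangular.left_ne_right (hΦ : Φ.IsTriangular) (hV : 3 ≤ Fintype.card V)
    (e : G.edgeSet) : Φ.left e ≠ Φ.right e := by
  obtain ⟨t, -, hinc, hcontour⟩ := hΦ.exists_triangle hV (Φ.left e)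
  exact (Φ.contour_ne_zero_iff.1
    ((hcontour e).2 fun v hv => (hinc v).1 (Φ.inc_left v e hv))).2

theorem IsTriangular.exists_mem_boundary_iff (hΦ : Φ.IsTriangular) (hV : 3 ≤ Fintype.card V)
    (f : F) : ∃ t : Finset V, G.IsNClique 3 t ∧ ∀ e, e ∈ Φ.boundary f ↔ ∀ v ∈ e.1, v ∈ t := by
  obtain ⟨t, ht, -, hcontour⟩ := hΦ.exists_triangle hV f
  refine ⟨t, ht, fun e => ?_⟩
  rw [← hcontour, Φ.contour_ne_zero_iff, mem_boundary, and_iff_left (hΦ.left_ne_right hV e)]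

theorem IsTriangular.card_boundary (hΦ : Φ.IsTriangular) (hV : 3 ≤ Fintype.card V) (f : F) :
    (Φ.boundary f).card = 3 := by
  obtain ⟨t, ht, hmem⟩ := hΦ.exists_mem_boundary_iff hV f
  exact card_edges_of_isNClique_three ht hmem

end FaceSystem

/-! ### Petersen's theorem for the dual graph -/

section ComponentVerts

variable {W : Type*} {D : SimpleGraph W} {u : Set W}
  {C C' : ((⊤ : D.Subgraph).deleteVerts u).coe.ConnectedComponent} {f g : W}

/-- The vertex set of a component of `D` with the vertices in `u` deleted, as a set of vertices
of `D`. -/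
def componentVerts (C : ((⊤ : D.Subgraph).deleteVerts u).coe.ConnectedComponent) : Set W :=
  Subtype.val '' C.supp

theorem ncard_componentVerts : (componentVerts C).ncard = C.supp.ncard :=
  Set.ncard_image_of_injective _ Subtype.val_injective

theorem notMem_of_mem_componentVerts (hf : f ∈ componentVerts C) : f ∉ u := by
  obtain ⟨⟨f, hfu⟩, -, rfl⟩ := hf
  simpa using hfu

theorem eq_of_mem_componentVerts (h : f ∈ componentVerts C) (h' : f ∈ componentVerts C') :
    C = C' := by
  obtain ⟨f, hf, rfl⟩ := h
  obtain ⟨f', hf', heq⟩ := h'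
  obtain rfl := Subtype.ext heq
  exact hf.symm.trans hf'

theorem mem_componentVerts_of_adj (hf : f ∈ componentVerts C) (hfg : D.Adj f g) (hg : g ∉ u) :
    g ∈ componentVerts C := by
  have hfu := notMem_of_mem_componentVerts hf
  obtain ⟨f, hfC, rfl⟩ := hf
  refine ⟨⟨g, by simpa using hg⟩, ?_, rfl⟩
  rw [ConnectedComponent.mem_supp_iff] at hfC ⊢
  rw [← hfC, ConnectedComponent.eq]
  exact Adj.reachable (by simpa [hg, hfu] using hfg.symm)

end ComponentVerts

namespace FaceSystem

variable {G : SimpleGraph V} [Fintype G.edgeSet] {F : Type*} (Φ : FaceSystem G F)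

/-- The dual graph of a system of faces, without its loops and multiplicities. -/
def dual : SimpleGraph F where
  Adj f g := f ≠ g ∧ ∃ e, s(Φ.left e, Φ.right e) = s(f, g)
  symm := ⟨fun _ _ h => ⟨h.1.symm, h.2.imp fun _ he => he.trans Sym2.eq_swap⟩⟩
  loopless := ⟨fun _ h => h.1 rfl⟩

/-- The edges of `G` across which a set of faces is left. -/
noncomputable def cut (A : Set F) : Finset G.edgeSet := by
  classical exact Finset.univ.filter fun e => ¬ (Φ.left e ∈ A ↔ Φ.right e ∈ A)

theorem mem_cut {A : Set F} {e : G.edgeSet} :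
    e ∈ Φ.cut A ↔ ¬ (Φ.left e ∈ A ↔ Φ.right e ∈ A) := by
  simp [cut]

theorem mem_cut_of_jump_ne_zero {A : Set F} {e : G.edgeSet}
    (h : Φ.jump (fun f => ind (f ∈ A)) e ≠ 0) : e ∈ Φ.cut A := by
  rw [mem_cut]
  exact fun heq => h (by rw [jump_apply, propext heq, CharTwo.add_self_eq_zero])

variable {Φ}

open scoped Classical in
theorem sum_sides [Fintype F] (hne : ∀ e, Φ.left e ≠ Φ.right e) {M : Type*}
    [AddCommMonoid M] {X : Finset G.edgeSet} {k : ℕ}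
    (hX : ∀ f, (X.filter (· ∈ Φ.boundary f)).card = k) (φ : F → M) :
    ∑ e ∈ X, (φ (Φ.left e) + φ (Φ.right e)) = k • ∑ f, φ f := by
  calc ∑ e ∈ X, (φ (Φ.left e) + φ (Φ.right e))
      = ∑ e ∈ X, ∑ f with e ∈ Φ.boundary f, φ f := by
        refine Finset.sum_congr rfl fun e _ => ?_
        have hsides : ({f | e ∈ Φ.boundary f} : Finset F) = {Φ.left e, Φ.right e} := by
          ext f
          simp [mem_boundary, eq_comm]
        rw [hsides, Finset.sum_pair (hne e)]
    _ = ∑ f, ∑ e ∈ X with e ∈ Φ.boundary f, φ f := by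
        simp only [Finset.sum_filter]
        exact Finset.sum_comm
    _ = k • ∑ f, φ f := by simp only [Finset.sum_const, hX, Finset.smul_sum]

theorem sum_sides_univ [Fintype F] (hne : ∀ e, Φ.left e ≠ Φ.right e) {M : Type*}
    [AddCommMonoid M] (hcubic : ∀ f, (Φ.boundary f).card = 3) (φ : F → M) :
    ∑ e, (φ (Φ.left e) + φ (Φ.right e)) = 3 • ∑ f, φ f := by
  classical
  exact sum_sides hne (fun f => by rw [Finset.filter_univ_mem, hcubic]) φ

/-- The cut is a cycle of the simple graph `G` modulo two; it is not empty because it has the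
parity of `3 * A.ncard`. -/
theorem three_le_card_cut [Finite F] (hne : ∀ e, Φ.left e ≠ Φ.right e)
    (hcubic : ∀ f, (Φ.boundary f).card = 3) {A : Set F} (hA : Odd A.ncard) :
    3 ≤ (Φ.cut A).card := by
  classical
  have := Fintype.ofFinite F
  refine (Φ.isEvenChain_jump fun f => ind (f ∈ A)).three_le_card ?_
    fun e => Φ.mem_cut_of_jump_ne_zero
  by_contra! hcon
  have hsum : ∑ f, ind (f ∈ A) = 1 := by
    rw [sum_ind, ← ZMod.natCast_eq_one_iff_odd.2 hA, Set.ncard_eq_toFinset_card', Set.toFinset]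
    congr 2
    ext; simp
  have h3 := sum_sides_univ hne hcubic fun f => ind (f ∈ A)
  rw [Finset.sum_eq_zero (f := fun e => ind _ + ind _) fun e _ => hcon e, hsum] at h3
  exact absurd h3 (by decide)

theorem mem_of_mem_cut_componentVerts (hne : ∀ e, Φ.left e ≠ Φ.right e) {u : Set F}
    {C : ((⊤ : Φ.dual.Subgraph).deleteVerts u).coe.ConnectedComponent} {e : G.edgeSet}
    (he : e ∈ Φ.cut (componentVerts C)) :
    (Φ.left e ∈ componentVerts C ∧ Φ.right e ∈ u) ∨
      (Φ.right e ∈ componentVerts C ∧ Φ.left e ∈ u) := by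
  have hadj : Φ.dual.Adj (Φ.left e) (Φ.right e) := ⟨hne e, e, rfl⟩
  rw [mem_cut] at he
  by_contra! hcon
  exact he ⟨fun h => mem_componentVerts_of_adj h hadj (hcon.1 h),
    fun h => mem_componentVerts_of_adj h hadj.symm (hcon.2 h)⟩

theorem pairwise_disjoint_cut_componentVerts (hne : ∀ e, Φ.left e ≠ Φ.right e) (u : Set F) :
    Pairwise (Disjoint on
      fun C : ((⊤ : Φ.dual.Subgraph).deleteVerts u).coe.ConnectedComponent =>
        Φ.cut (componentVerts C)) := by
  intro C C' hCC'
  rw [Function.onFun, Finset.disjoint_left]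
  intro e h h'
  rcases mem_of_mem_cut_componentVerts hne h with ⟨h1, -⟩ | ⟨h1, -⟩ <;>
    rcases mem_of_mem_cut_componentVerts hne h' with ⟨h1', h2'⟩ | ⟨h1', h2'⟩
  · exact hCC' (eq_of_mem_componentVerts h1 h1')
  · exact notMem_of_mem_componentVerts h1 h2'
  · exact notMem_of_mem_componentVerts h1 h2'
  · exact hCC' (eq_of_mem_componentVerts h1 h1')

/-- Petersen's theorem, from Tutte's: every odd component of the dual graph without `u` sends at
least three edges to `u`, and every face in `u` receives three edges at most. -/
theorem exists_isPerfectMatching_dual [Finite F] (hne : ∀ e, Φ.left e ≠ Φ.right e)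
    (hcubic : ∀ f, (Φ.boundary f).card = 3) :
    ∃ M : Φ.dual.Subgraph, M.IsPerfectMatching := by
  classical
  have := Fintype.ofFinite F
  rw [SimpleGraph.tutte]
  intro u hu
  let H := ((⊤ : Φ.dual.Subgraph).deleteVerts u).coe
  let cuts := H.oddComponents.toFinset.biUnion fun C => Φ.cut (componentVerts C)
  have hlower : 3 * H.oddComponents.ncard ≤ cuts.card := by
    rw [Finset.card_biUnion fun C _ C' _ h => pairwise_disjoint_cut_componentVerts hne u h,
      Set.ncard_eq_toFinset_card', mul_comm, ← smul_eq_mul]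
    refine Finset.card_nsmul_le_sum _ _ _ fun C hC => three_le_card_cut hne hcubic ?_
    rw [ncard_componentVerts]
    simpa using hC
  have hupper : cuts.card ≤ u.ncard * 3 := by
    rw [Set.ncard_eq_toFinset_card']
    refine (Finset.card_le_card ?_).trans
      (Finset.card_biUnion_le_card_mul u.toFinset Φ.boundary 3 fun f _ => (hcubic f).le)
    intro e he
    obtain ⟨C, -, he⟩ := Finset.mem_biUnion.1 he
    simp only [Finset.mem_biUnion, Set.mem_toFinset, mem_boundary]
    rcases mem_of_mem_cut_componentVerts hne he with ⟨-, h⟩ | ⟨-, h⟩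
    · exact ⟨_, h, Or.inr rfl⟩
    · exact ⟨_, h, Or.inl rfl⟩
  have hviolates : u.ncard < H.oddComponents.ncard := hu
  omega

open scoped Classical in
theorem exists_edges_of_isPerfectMatching {M : Φ.dual.Subgraph} (hM : M.IsPerfectMatching) :
    ∃ X : Finset G.edgeSet, ∀ f, (X.filter (· ∈ Φ.boundary f)).card = 1 := by
  have hcross : ∀ p : M.edgeSet, ∃ e, s(Φ.left e, Φ.right e) = p.1 := by
    rintro ⟨⟨f, g⟩, h⟩
    exact (M.adj_sub h).2
  choose c hc using hcross
  refine ⟨Finset.univ.filter (· ∈ Set.range c), fun f => ?_⟩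
  obtain ⟨g, hg, huniq⟩ := hM.1 (hM.2 f)
  refine Finset.card_eq_one.2 ⟨c ⟨s(f, g), hg⟩, ?_⟩
  ext e
  simp only [Finset.mem_filter, Finset.mem_univ, true_and, Finset.mem_singleton, mem_boundary]
  constructor
  · rintro ⟨⟨⟨p, hp⟩, rfl⟩, hf⟩
    obtain ⟨k, rfl⟩ : f ∈ p := by
      have := hc ⟨p, hp⟩
      rw [← show _ = p from this, Sym2.mem_iff]
      exact hf.imp Eq.symm Eq.symm
    obtain rfl := huniq k hp
    rfl
  · rintro rfl
    have := Sym2.eq_iff.1 (hc ⟨s(f, g), hg⟩)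
    exact ⟨⟨_, rfl⟩, this.imp And.left And.right⟩

end FaceSystem

/-! ### Transversals of a triangular system of faces -/

namespace FaceSystem

variable {G : SimpleGraph V} [Fintype G.edgeSet] {F : Type*} {Φ : FaceSystem G F}

open scoped Classical in
theorem isTriangleTransversal_of_card_boundary_eq_one [Finite F] (hne : ∀ e, Φ.left e ≠ Φ.right e)
    (hcubic : ∀ f, (Φ.boundary f).card = 3) {X : Finset G.edgeSet}
    (hX : ∀ f, (X.filter (· ∈ Φ.boundary f)).card = 1) :
    IsTriangleTransversal G (X.map (Function.Embedding.subtype _)) := by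
  have := Fintype.ofFinite F
  refine ⟨?_, fun t ht => ?_⟩
  · intro e he
    obtain ⟨e, -, rfl⟩ := Finset.mem_map.1 he
    exact e.2
  · by_contra! hcon
    obtain ⟨φ, hφ, -⟩ := Φ.exists_potential _ (isEvenChain_triangle ht)
    have hone : ∑ f, φ f = 0 := by
      rw [← one_smul ℕ (∑ f, φ f), ← sum_sides hne hX φ]
      refine Finset.sum_eq_zero fun e he => (hφ e).trans ?_
      obtain ⟨v, hv, hvt⟩ := hcon e.1 (Finset.mem_map_of_mem _ he)
      exact ind_false fun h => hvt (h v hv)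
    classical
    have hthree := sum_sides_univ hne hcubic φ
    simp only [hφ] at hthree
    rw [hone, smul_zero, sum_ind, card_edges_of_isNClique_three ht (by simp)] at hthree
    exact absurd hthree (by decide)

variable [Fintype V]

theorem IsTriangular.card_faces [Fintype F] (hΦ : Φ.IsTriangular) (hV : 3 ≤ Fintype.card V) :
    Fintype.card F = 2 * (Fintype.card V - 2) := by
  have : Nonempty V := Fintype.card_pos_iff.1 (by omega)
  have heuler := Φ.euler hΦ.connected
  have hcount := sum_sides_univ (hΦ.left_ne_right hV) (hΦ.card_boundary hV) fun _ => (1 : ℕ)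
  simp only [Finset.sum_const, Finset.card_univ, smul_eq_mul, mul_one] at hcount
  omega

theorem IsTriangular.card_faces_le_of_isTriangleTransversal [Fintype F] (hΦ : Φ.IsTriangular)
    (hV : 3 ≤ Fintype.card V) {X : Finset (Sym2 V)} (hX : IsTriangleTransversal G X) :
    Fintype.card F ≤ X.card * 2 := by
  classical
  let sides (e : Sym2 V) : Finset F := Finset.univ.filter fun f => ∃ h, ⟨e, h⟩ ∈ Φ.boundary f
  have hsides : ∀ e, (sides e).card ≤ 2 := fun e => by
    by_cases he : e ∈ G.edgeSet
    · refine (Finset.card_le_card (t := {Φ.left ⟨e, he⟩, Φ.right ⟨e, he⟩}) fun f hf => ?_).trans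
        Finset.card_le_two
      simpa [sides, he, mem_boundary, eq_comm] using hf
    · simp [sides, he]
  rw [← Finset.card_univ]
  refine (Finset.card_le_card fun f _ => ?_).trans
    (Finset.card_biUnion_le_card_mul X sides 2 fun e _ => hsides e)
  obtain ⟨t, ht, hmem⟩ := hΦ.exists_mem_boundary_iff hV f
  obtain ⟨e, he, het⟩ := hX.2 t ht
  exact Finset.mem_biUnion.2 ⟨e, he, by simpa [sides] using ⟨hX.1 he, (hmem ⟨e, hX.1 he⟩).2 het⟩⟩

theorem IsTriangular.tau_eq [Finite F] (hΦ : Φ.IsTriangular) (hV : 3 ≤ Fintype.card V) :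
    tau G = Fintype.card V - 2 := by
  have := Fintype.ofFinite F
  have hne := hΦ.left_ne_right hV
  have hcubic := hΦ.card_boundary hV
  have hF := hΦ.card_faces hV
  obtain ⟨M, hM⟩ := exists_isPerfectMatching_dual hne hcubic
  obtain ⟨X, hX⟩ := exists_edges_of_isPerfectMatching hM
  have hcard : X.card = Fintype.card V - 2 := by
    have := sum_sides hne hX fun _ => (1 : ℕ)
    simp only [Finset.sum_const, Finset.card_univ, smul_eq_mul, mul_one] at this
    omega
  have htrans := isTriangleTransversal_of_card_boundary_eq_one hne hcubic hX
  refine le_antisymm (Nat.sInf_le ⟨_, htrans, by rw [Finset.card_map, hcard]⟩)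
    (le_csInf ⟨_, _, htrans, rfl⟩ ?_)
  rintro n ⟨Y, hY, rfl⟩
  have := hΦ.card_faces_le_of_isTriangleTransversal hV hY
  omega

end FaceSystem

/-! ### Locally constant functions -/

theorem eq_of_isPreconnected_of_eventually_eq {X α : Type*} [TopologicalSpace X] {O : Set X}
    (hO : IsPreconnected O) {f : X → α} (h : ∀ x ∈ O, ∀ᶠ y in 𝓝[O] x, f y = f x)
    {x y : X} (hx : x ∈ O) (hy : y ∈ O) : f x = f y := by
  refine hO.induction₂ (fun a b => f a = f b) ?_ ?_ ?_ hx hy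
  · intro x hx
    filter_upwards [h x hx] with y hy using hy.symm
  · exact fun _ _ _ _ _ _ => Eq.trans
  · exact fun _ _ _ _ => Eq.symm

theorem eq_of_isPreconnected_of_eventually_eq_off {X α : Type*} [TopologicalSpace X] {O D : Set X}
    (hO : IsPreconnected O) (hOo : IsOpen O) (hD : Dense Dᶜ) {f : X → α}
    (h : ∀ x ∈ O, ∃ c, ∀ᶠ y in 𝓝 x, y ∉ D → f y = c)
    {x y : X} (hx : x ∈ O) (hy : y ∈ O) (hxD : x ∉ D) (hyD : y ∉ D) : f x = f y := by
  have : Nonempty α := ⟨f x⟩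
  choose! c hc using h
  have hcxy : c x = c y := by
    refine eq_of_isPreconnected_of_eventually_eq hO (fun z hz => ?_) hx hy
    rw [hOo.nhdsWithin_eq hz]
    filter_upwards [(hc z hz).eventually_nhds, hOo.mem_nhds hz] with z' h1 h2
    obtain ⟨w, hw, hw1, hw2⟩ := hD.inter_nhds_nonempty (h1.and (hc z' h2))
    rw [← hw1 hw, ← hw2 hw]
  rw [(hc x hx).self_of_nhds hxD, (hc y hy).self_of_nhds hyD, hcxy]

theorem eventually_ind_lt {X : Type*} [TopologicalSpace X] {f g : X → ℝ} {a : X}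
    (hf : ContinuousAt f a) (hg : ContinuousAt g a) (hne : f a ≠ g a) :
    ∀ᶠ x in 𝓝 a, ind (f x < g x) = ind (f a < g a) := by
  rcases hne.lt_or_gt with h | h
  · filter_upwards [hf.eventually_lt hg h] with x hx
    rw [ind_true hx, ind_true h]
  · filter_upwards [hg.eventually_lt hf h] with x hx
    rw [ind_false hx.not_gt, ind_false h.not_gt]

theorem continuous_complex_mk {X : Type*} [TopologicalSpace X] {f g : X → ℝ} (hf : Continuous f)
    (hg : Continuous g) : Continuous fun x => (⟨f x, g x⟩ : ℂ) :=
  Complex.equivRealProdCLM.symm.continuous.comp (hf.prodMk hg)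

theorem isPreconnected_setOf_norm_sub_mem (w : ℂ) {I : Set ℝ} (hI : IsPreconnected I)
    (hpos : ∀ r ∈ I, 0 < r) : IsPreconnected {z : ℂ | ‖z - w‖ ∈ I} := by
  have hpolar : {z : ℂ | ‖z - w‖ ∈ I} =
      (fun q : ℝ × ℝ => w + q.1 * Complex.exp (q.2 * Complex.I)) '' (I ×ˢ Set.univ) := by
    ext z
    constructor
    · intro hz
      refine ⟨(‖z - w‖, Complex.arg (z - w)), ⟨hz, trivial⟩, ?_⟩
      simp [Complex.norm_mul_exp_arg_mul_I]
    · rintro ⟨⟨r, θ⟩, ⟨hr, -⟩, rfl⟩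
      simpa [Complex.norm_exp_ofReal_mul_I, abs_of_pos (hpos r hr)] using hr
  rw [hpolar]
  exact (hI.prod isPreconnected_univ).image _ (by fun_prop)

theorem mem_segment_of_add_smul_mem_segment {E : Type*} [NormedAddCommGroup E] [NormedSpace ℝ E]
    {w v z : E} {c : ℝ} (hc : 0 < c) (hz : ‖z - w‖ ≤ ‖v - w‖)
    (h : w + c • (z - w) ∈ segment ℝ w v) : z ∈ segment ℝ w v := by
  rcases eq_or_ne v w with rfl | hvw
  · simp only [sub_self, norm_zero, norm_le_zero_iff, sub_eq_zero] at hz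
    exact hz ▸ left_mem_segment ..
  rw [segment_eq_image'] at h ⊢
  obtain ⟨d, ⟨hd, -⟩, hdc⟩ := h
  have hzw : z - w = (d / c) • (v - w) := by
    rw [div_eq_inv_mul, mul_smul, add_left_cancel hdc, inv_smul_smul₀ hc.ne']
  refine ⟨d / c, ⟨by positivity, ?_⟩, by simp only [← hzw, add_sub_cancel]⟩
  rw [hzw, norm_smul, Real.norm_of_nonneg (by positivity)] at hz
  exact le_of_mul_le_mul_right (by rwa [one_mul]) (norm_pos_iff.2 (sub_ne_zero.2 hvw))

/-! ### Straight-line plane graphs -/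

/-- A finite straight-line plane graph in general position: segments joining nodes with distinct
real parts, any two of which meet only in nodes. Nodes may be isolated. -/
structure SegmentGraph (S : Type*) where
  fst : S → ℂ
  snd : S → ℂ
  nodes : Set ℂ
  nodes_finite : nodes.Finite
  fst_mem : ∀ s, fst s ∈ nodes
  snd_mem : ∀ s, snd s ∈ nodes
  fst_ne_snd : ∀ s, fst s ≠ snd s
  re_injOn : nodes.InjOn Complex.re
  inter : ∀ ⦃s s' : S⦄, s ≠ s' → ∀ z ∈ segment ℝ (fst s) (snd s),
    z ∈ segment ℝ (fst s') (snd s') → z ∈ nodes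
  node_mem : ∀ w ∈ nodes, ∀ s, w ∈ segment ℝ (fst s) (snd s) → w = fst s ∨ w = snd s

namespace SegmentGraph

variable {S : Type*} (Γ : SegmentGraph S)

/-- The closed segment with a given index. -/
def seg (s : S) : Set ℂ := segment ℝ (Γ.fst s) (Γ.snd s)

/-- The slope of a segment; the division is harmless because nodes have distinct abscissas. -/
noncomputable def slope (s : S) : ℝ :=
  ((Γ.snd s).im - (Γ.fst s).im) / ((Γ.snd s).re - (Γ.fst s).re)

/-- The height of the line through a segment at the abscissa `t`, also outside the segment. -/
noncomputable def height (s : S) (t : ℝ) : ℝ := (Γ.fst s).im + (t - (Γ.fst s).re) * Γ.slope s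

/-- The point at the abscissa `t` of the line through a segment. -/
noncomputable def point (s : S) (t : ℝ) : ℂ := ⟨t, Γ.height s t⟩

/-- The open interval of abscissas of a segment. -/
def span (s : S) : Set ℝ := Set.uIoo (Γ.fst s).re (Γ.snd s).re

/-- The union of all nodes and segments. -/
def support : Set ℂ := Γ.nodes ∪ ⋃ s, Γ.seg s

/-- The face containing a point. This is empty for the points of the graph. -/
def face (z : ℂ) : Set ℂ := connectedComponentIn Γ.supportᶜ z

/-- The set of faces. -/
def faces : Set (Set ℂ) := Γ.face '' Γ.supportᶜ

/-- The open half-plane above the line through a segment. -/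
def above (s : S) : Set ℂ := {z | Γ.height s z.re < z.im}

/-- The open half-plane below the line through a segment. -/
def below (s : S) : Set ℂ := {z | z.im < Γ.height s z.re}

theorem re_ne (s : S) : (Γ.fst s).re ≠ (Γ.snd s).re :=
  fun h => Γ.fst_ne_snd s (Γ.re_injOn (Γ.fst_mem s) (Γ.snd_mem s) h)

theorem point_fst (s : S) : Γ.point s (Γ.fst s).re = Γ.fst s := by
  simp [point, height]

theorem point_snd (s : S) : Γ.point s (Γ.snd s).re = Γ.snd s := by
  have := sub_ne_zero.2 (Γ.re_ne s).symm
  refine Complex.ext rfl ?_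
  simp only [point, height, slope]
  field_simp
  ring

theorem point_combo (s : S) {a b : ℝ} (hab : a + b = 1) (x y : ℝ) :
    Γ.point s (a * x + b * y) = a • Γ.point s x + b • Γ.point s y := by
  obtain rfl : b = 1 - a := by linarith
  refine Complex.ext (by simp [point]) ?_
  simp only [point, height, Complex.add_im, Complex.smul_im, smul_eq_mul]
  ring

@[fun_prop]
theorem continuous_height (s : S) : Continuous (Γ.height s) := by
  unfold height
  fun_prop

theorem continuous_point (s : S) : Continuous (Γ.point s) :=
  continuous_complex_mk continuous_id (Γ.continuous_height s)

theorem height_sub_im (s : S) (z : ℂ) : Γ.height s z.re - z.im =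
    (Γ.slope s • Complex.reLm - Complex.imLm) z + Γ.height s 0 := by
  simp [height]
  ring

theorem convex_above (s : S) : Convex ℝ (Γ.above s) := by
  have := convex_halfSpace_lt (Γ.slope s • Complex.reLm - Complex.imLm).isLinear (-Γ.height s 0)
  simpa only [above, ← sub_neg (a := Γ.height s _), height_sub_im, ← lt_neg_iff_add_neg] using this

theorem convex_below (s : S) : Convex ℝ (Γ.below s) := by
  have := convex_halfSpace_gt (Γ.slope s • Complex.reLm - Complex.imLm).isLinear (-Γ.height s 0)
  simpa only [below, ← sub_pos (a := Γ.height s _), height_sub_im, ← neg_lt_iff_pos_add] using this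

theorem mem_seg_iff {s : S} {z : ℂ} :
    z ∈ Γ.seg s ↔ z.re ∈ Set.uIcc (Γ.fst s).re (Γ.snd s).re ∧ z.im = Γ.height s z.re := by
  have hpoint : z.im = Γ.height s z.re ↔ Γ.point s z.re = z :=
    ⟨fun h => Complex.ext rfl h.symm, fun h => (congrArg Complex.im h).symm⟩
  rw [hpoint, ← segment_eq_uIcc, seg]
  constructor
  · rintro ⟨a, b, ha, hb, hab, rfl⟩
    have hre : (a • Γ.fst s + b • Γ.snd s).re = a * (Γ.fst s).re + b * (Γ.snd s).re := by simp
    exact ⟨⟨a, b, ha, hb, hab, hre.symm⟩,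
      by rw [hre, Γ.point_combo s hab, point_fst, point_snd]⟩
  · rintro ⟨⟨a, b, ha, hb, hab, h⟩, hz⟩
    refine ⟨a, b, ha, hb, hab, ?_⟩
    rw [← hz, ← h, smul_eq_mul, smul_eq_mul, Γ.point_combo s hab, point_fst, point_snd]

theorem point_re {s : S} {z : ℂ} (hz : z ∈ Γ.seg s) : Γ.point s z.re = z :=
  Complex.ext rfl (Γ.mem_seg_iff.1 hz).2.symm

theorem point_mem_seg {s : S} {t : ℝ} (ht : t ∈ Γ.span s) : Γ.point s t ∈ Γ.seg s :=
  Γ.mem_seg_iff.2 ⟨Set.uIoo_subset_uIcc_self ht, rfl⟩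

theorem seg_subset_support (s : S) : Γ.seg s ⊆ Γ.support :=
  (Set.subset_iUnion Γ.seg s).trans Set.subset_union_right

theorem isCompact_seg (s : S) : IsCompact (Γ.seg s) := by
  rw [seg, ← convexHull_pair]
  exact (Set.toFinite _).isCompact_convexHull ℝ

theorem isCompact_support [Finite S] : IsCompact Γ.support :=
  Γ.nodes_finite.isCompact.union (isCompact_iUnion Γ.isCompact_seg)

theorem span_nonempty (s : S) : (Γ.span s).Nonempty :=
  Set.nonempty_Ioo.2 (inf_lt_sup.2 (Γ.re_ne s))

theorem mem_span_iff {s : S} {t : ℝ} : t ∈ Γ.span s ↔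
    t ∈ Set.uIcc (Γ.fst s).re (Γ.snd s).re ∧ (Γ.fst s).re ≠ t ∧ (Γ.snd s).re ≠ t := by
  rw [span, Set.uIoo, Set.mem_Ioo, inf_lt_iff, lt_sup_iff, Set.mem_uIcc]
  grind

theorem point_notMem_nodes {s : S} {t : ℝ} (ht : t ∈ Γ.span s) : Γ.point s t ∉ Γ.nodes := by
  intro h
  obtain ⟨-, hfst, hsnd⟩ := Γ.mem_span_iff.1 ht
  rcases Γ.node_mem _ h s (Γ.point_mem_seg ht) with h | h
  · exact hfst (congrArg Complex.re h).symm
  · exact hsnd (congrArg Complex.re h).symm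

theorem re_mem_span {s : S} {z : ℂ} (hz : z ∈ Γ.seg s) (hn : z ∉ Γ.nodes) : z.re ∈ Γ.span s := by
  refine Γ.mem_span_iff.2 ⟨(Γ.mem_seg_iff.1 hz).1, fun h => hn ?_, fun h => hn ?_⟩
  · rw [← Γ.point_re hz, ← h, point_fst]
    exact Γ.fst_mem s
  · rw [← Γ.point_re hz, ← h, point_snd]
    exact Γ.snd_mem s

theorem eq_of_point_mem_seg {s s' : S} {t : ℝ} (ht : t ∈ Γ.span s) (h : Γ.point s t ∈ Γ.seg s') :
    s' = s := by
  by_contra hne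
  exact Γ.point_notMem_nodes ht (Γ.inter hne _ h (Γ.point_mem_seg ht))

theorem seg_subset_closure {s : S} {f : Set ℂ}
    (h : ∀ t ∈ Γ.span s, ∃ᶠ z in 𝓝 (Γ.point s t), z ∈ f) : Γ.seg s ⊆ closure f := by
  have hspan : Γ.point s '' Γ.span s ⊆ closure f := by
    rintro _ ⟨t, ht, rfl⟩
    exact mem_closure_iff_frequently.2 (h t ht)
  intro z hz
  have hre : z.re ∈ closure (Γ.span s) := by
    rw [span, Set.uIoo, closure_Ioo (inf_lt_sup.2 (Γ.re_ne s)).ne]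
    exact (Γ.mem_seg_iff.1 hz).1
  exact closure_minimal hspan isClosed_closure
    (image_closure_subset_closure_image (Γ.continuous_point s) ⟨_, hre, Γ.point_re hz⟩)

theorem finite_setOf_mk_mem_support [Finite S] (t : ℝ) :
    {y : ℝ | (⟨t, y⟩ : ℂ) ∈ Γ.support}.Finite := by
  refine ((Γ.nodes_finite.image Complex.im).union
    (Set.finite_range fun s => Γ.height s t)).subset ?_
  rintro y (h | h)
  · exact Or.inl ⟨_, h, rfl⟩
  · obtain ⟨s, hs⟩ := Set.mem_iUnion.1 h
    exact Or.inr ⟨s, (Γ.mem_seg_iff.1 hs).2.symm⟩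

theorem dense_compl_support [Finite S] : Dense Γ.supportᶜ := by
  rw [← interior_eq_empty_iff_dense_compl, Set.eq_empty_iff_forall_notMem]
  intro z hz
  have hvert : Continuous fun y : ℝ => (⟨z.re, y⟩ : ℂ) :=
    continuous_complex_mk continuous_const continuous_id
  exact infinite_of_mem_nhds z.im (hvert.continuousAt.preimage_mem_nhds
    (mem_interior_iff_mem_nhds.1 hz)) (Γ.finite_setOf_mk_mem_support z.re)

/-! ### Faces of straight-line plane graphs -/

theorem face_eq_of_isPreconnected {C : Set ℂ} (hC : IsPreconnected C) (hCs : C ⊆ Γ.supportᶜ)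
    {z z' : ℂ} (hz : z ∈ C) (hz' : z' ∈ C) : Γ.face z = Γ.face z' :=
  connectedComponentIn_eq (hC.subset_connectedComponentIn hz hCs hz')

theorem mem_face {z : ℂ} (hz : z ∉ Γ.support) : z ∈ Γ.face z := mem_connectedComponentIn hz

theorem face_subset (z : ℂ) : Γ.face z ⊆ Γ.supportᶜ := connectedComponentIn_subset ..

theorem face_eq_of_mem {z z' : ℂ} (h : z' ∈ Γ.face z) : Γ.face z' = Γ.face z :=
  (connectedComponentIn_eq h).symm

theorem eventually_face_eq [Finite S] {z : ℂ} (hz : z ∉ Γ.support) :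
    ∀ᶠ z' in 𝓝 z, Γ.face z' = Γ.face z := by
  have := Γ.isCompact_support.isClosed.isOpen_compl.connectedComponentIn (x := z)
  filter_upwards [this.mem_nhds (Γ.mem_face hz)] with z' hz' using Γ.face_eq_of_mem hz'

theorem eventually_mem_imp [Finite S] (p : ℂ) : ∀ᶠ z in 𝓝 p,
    (z ∈ Γ.nodes → z = p) ∧ ∀ s, z ∈ Γ.seg s → p ∈ Γ.seg s := by
  refine Eventually.and ?_ (eventually_all.2 fun s => ?_)
  · have hclosed := (Γ.nodes_finite.subset (Set.sdiff_subset (t := {p}))).isClosed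
    filter_upwards [hclosed.isOpen_compl.mem_nhds (by simp)] with z hz hzn
    by_contra hne
    exact hz ⟨hzn, hne⟩
  · by_cases hp : p ∈ Γ.seg s
    · exact Eventually.of_forall fun _ _ => hp
    · filter_upwards [(Γ.isCompact_seg s).isClosed.isOpen_compl.mem_nhds hp] with z hz hzs
      exact (hz hzs).elim

theorem exists_side_at [Finite S] {s : S} {H : Set ℂ} (hH : Convex ℝ H)
    (hoff : ∀ z ∈ H, z.im ≠ Γ.height s z.re) {t : ℝ} (hfreq : ∃ᶠ z in 𝓝 (Γ.point s t), z ∈ H)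
    (ht : t ∈ Γ.span s) :
    ∃ f, ∀ᶠ z in 𝓝 (Γ.point s t), z ∈ H → z ∉ Γ.support ∧ Γ.face z = f := by
  obtain ⟨r, hr, hball⟩ :=
    Metric.eventually_nhds_iff_ball.1 (Γ.eventually_mem_imp (Γ.point s t))
  obtain ⟨p, hpH, hp⟩ := (hfreq.and_eventually (Metric.ball_mem_nhds _ hr)).exists
  have hsub : Metric.ball (Γ.point s t) r ∩ H ⊆ Γ.supportᶜ := by
    rintro z ⟨hz, hzH⟩ (h | h)
    · exact Γ.point_notMem_nodes ht ((hball z hz).1 h ▸ h)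
    · obtain ⟨s', hs'⟩ := Set.mem_iUnion.1 h
      obtain rfl := Γ.eq_of_point_mem_seg ht ((hball z hz).2 s' hs')
      exact hoff z hzH (Γ.mem_seg_iff.1 hs').2
  refine ⟨Γ.face p, ?_⟩
  filter_upwards [Metric.ball_mem_nhds _ hr] with z hz hzH
  exact ⟨hsub ⟨hz, hzH⟩, Γ.face_eq_of_isPreconnected
    ((convex_ball _ r).inter hH).isPreconnected hsub ⟨hz, hzH⟩ ⟨hp, hpH⟩⟩

theorem exists_side [Finite S] {s : S} {H : Set ℂ} (hH : Convex ℝ H)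
    (hoff : ∀ z ∈ H, z.im ≠ Γ.height s z.re) (hfreq : ∀ t, ∃ᶠ z in 𝓝 (Γ.point s t), z ∈ H) :
    ∃ f, ∀ t ∈ Γ.span s, ∀ᶠ z in 𝓝 (Γ.point s t), z ∈ H → z ∉ Γ.support ∧ Γ.face z = f := by
  choose! f hf using fun t (ht : t ∈ Γ.span s) => Γ.exists_side_at hH hoff (hfreq t) ht
  obtain ⟨t₀, ht₀⟩ := Γ.span_nonempty s
  refine ⟨f t₀, fun t ht => ?_⟩
  rw [eq_of_isPreconnected_of_eventually_eq (f := f) isPreconnected_Ioo (fun t ht => ?_) ht₀ ht]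
  · exact hf t ht
  · rw [IsOpen.nhdsWithin_eq isOpen_Ioo ht]
    filter_upwards [((Γ.continuous_point s).tendsto t).eventually (hf t ht).eventually_nhds,
      IsOpen.mem_nhds isOpen_Ioo ht] with t' h1 h2
    obtain ⟨z, hz, h3, h4⟩ := ((hfreq t').and_eventually (h1.and (hf t' h2))).exists
    rw [← (h3 hz).2, (h4 hz).2]

theorem frequently_mem_above (s : S) (t : ℝ) : ∃ᶠ z in 𝓝 (Γ.point s t), z ∈ Γ.above s := by
  have hvert : Continuous fun y : ℝ => (⟨t, y⟩ : ℂ) :=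
    continuous_complex_mk continuous_const continuous_id
  exact ((hvert.tendsto _).mono_left nhdsWithin_le_nhds).frequently
    (Eventually.frequently (f := 𝓝[>] Γ.height s t) self_mem_nhdsWithin)

theorem frequently_mem_below (s : S) (t : ℝ) : ∃ᶠ z in 𝓝 (Γ.point s t), z ∈ Γ.below s := by
  have hvert : Continuous fun y : ℝ => (⟨t, y⟩ : ℂ) :=
    continuous_complex_mk continuous_const continuous_id
  exact ((hvert.tendsto _).mono_left nhdsWithin_le_nhds).frequently
    (Eventually.frequently (f := 𝓝[<] Γ.height s t) self_mem_nhdsWithin)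

theorem exists_upper [Finite S] (s : S) : ∃ f, ∀ t ∈ Γ.span s,
    ∀ᶠ z in 𝓝 (Γ.point s t), z ∈ Γ.above s → z ∉ Γ.support ∧ Γ.face z = f :=
  Γ.exists_side (Γ.convex_above s) (fun _ hz => ne_of_gt hz) (Γ.frequently_mem_above s)

theorem exists_lower [Finite S] (s : S) : ∃ f, ∀ t ∈ Γ.span s,
    ∀ᶠ z in 𝓝 (Γ.point s t), z ∈ Γ.below s → z ∉ Γ.support ∧ Γ.face z = f :=
  Γ.exists_side (Γ.convex_below s) (fun _ hz => ne_of_lt hz) (Γ.frequently_mem_below s)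

/-- The face above a segment. -/
noncomputable def upper [Finite S] (s : S) : Set ℂ := (Γ.exists_upper s).choose

/-- The face below a segment. -/
noncomputable def lower [Finite S] (s : S) : Set ℂ := (Γ.exists_lower s).choose

theorem eventually_upper [Finite S] {s : S} {t : ℝ} (ht : t ∈ Γ.span s) :
    ∀ᶠ z in 𝓝 (Γ.point s t), z ∈ Γ.above s → z ∉ Γ.support ∧ Γ.face z = Γ.upper s :=
  (Γ.exists_upper s).choose_spec t ht

theorem eventually_lower [Finite S] {s : S} {t : ℝ} (ht : t ∈ Γ.span s) :
    ∀ᶠ z in 𝓝 (Γ.point s t), z ∈ Γ.below s → z ∉ Γ.support ∧ Γ.face z = Γ.lower s :=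
  (Γ.exists_lower s).choose_spec t ht

theorem frequently_upper [Finite S] {s : S} {t : ℝ} (ht : t ∈ Γ.span s) :
    ∃ᶠ z in 𝓝 (Γ.point s t), z ∈ Γ.above s ∧ z ∉ Γ.support ∧ Γ.face z = Γ.upper s :=
  ((Γ.frequently_mem_above s t).and_eventually (Γ.eventually_upper ht)).mono
    fun _ h => ⟨h.1, h.2 h.1⟩

theorem frequently_lower [Finite S] {s : S} {t : ℝ} (ht : t ∈ Γ.span s) :
    ∃ᶠ z in 𝓝 (Γ.point s t), z ∈ Γ.below s ∧ z ∉ Γ.support ∧ Γ.face z = Γ.lower s :=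
  ((Γ.frequently_mem_below s t).and_eventually (Γ.eventually_lower ht)).mono
    fun _ h => ⟨h.1, h.2 h.1⟩

theorem upper_mem_faces [Finite S] (s : S) : Γ.upper s ∈ Γ.faces := by
  obtain ⟨t, ht⟩ := Γ.span_nonempty s
  obtain ⟨z, -, hz⟩ := (Γ.frequently_upper ht).exists
  exact ⟨z, hz⟩

theorem lower_mem_faces [Finite S] (s : S) : Γ.lower s ∈ Γ.faces := by
  obtain ⟨t, ht⟩ := Γ.span_nonempty s
  obtain ⟨z, -, hz⟩ := (Γ.frequently_lower ht).exists
  exact ⟨z, hz⟩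

theorem seg_subset_closure_upper [Finite S] (s : S) : Γ.seg s ⊆ closure (Γ.upper s) :=
  Γ.seg_subset_closure fun _ ht => (Γ.frequently_upper ht).mono
    fun _ ⟨_, hz, hface⟩ => hface ▸ Γ.mem_face hz

theorem seg_subset_closure_lower [Finite S] (s : S) : Γ.seg s ⊆ closure (Γ.lower s) :=
  Γ.seg_subset_closure fun _ ht => (Γ.frequently_lower ht).mono
    fun _ ⟨_, hz, hface⟩ => hface ▸ Γ.mem_face hz

theorem eq_of_no_jump [Finite S] {α : Type*} (φ : Set ℂ → α) {O : Set ℂ} (hO : IsPreconnected O)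
    (hOo : IsOpen O) (hn : Disjoint O Γ.nodes)
    (hj : ∀ s, (Γ.seg s ∩ O).Nonempty → φ (Γ.upper s) = φ (Γ.lower s))
    {z z' : ℂ} (hz : z ∈ O) (hz' : z' ∈ O) (hzs : z ∉ Γ.support) (hzs' : z' ∉ Γ.support) :
    φ (Γ.face z) = φ (Γ.face z') := by
  refine eq_of_isPreconnected_of_eventually_eq_off hO hOo Γ.dense_compl_support
    (f := fun z => φ (Γ.face z)) (fun w hw => ?_) hz hz' hzs hzs'
  have hwn := Set.disjoint_left.1 hn hw
  by_cases hws : w ∈ Γ.support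
  · obtain ⟨s, hs⟩ := Set.mem_iUnion.1 (hws.resolve_left hwn)
    have ht := Γ.re_mem_span hs hwn
    have hup := Γ.eventually_upper ht
    have hlow := Γ.eventually_lower ht
    rw [Γ.point_re hs] at hup hlow
    refine ⟨φ (Γ.upper s), ?_⟩
    filter_upwards [hup, hlow, (Complex.continuous_re.tendsto w).eventually
      (IsOpen.mem_nhds isOpen_Ioo ht)] with y hyup hylow hre hys
    rcases lt_trichotomy y.im (Γ.height s y.re) with h | h | h
    · rw [(hylow h).2, hj s ⟨w, hs, hw⟩]
    · have : y ∈ Γ.seg s := Γ.mem_seg_iff.2 ⟨Set.uIoo_subset_uIcc_self hre, h⟩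
      exact (hys (Γ.seg_subset_support s this)).elim
    · rw [(hyup h).2]
  · exact ⟨φ (Γ.face w), (Γ.eventually_face_eq hws).mono fun y hy _ => by rw [hy]⟩

theorem eq_of_no_jump_univ [Finite S] {α : Type*} (φ : Set ℂ → α)
    (hj : ∀ s, φ (Γ.upper s) = φ (Γ.lower s)) {f g : Set ℂ} (hf : f ∈ Γ.faces)
    (hg : g ∈ Γ.faces) : φ f = φ g := by
  obtain ⟨z, hz, rfl⟩ := hf
  obtain ⟨z', hz', rfl⟩ := hg
  have hO : IsPreconnected Γ.nodesᶜ :=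
    (Γ.nodes_finite.countable.isConnected_compl_of_one_lt_rank (by simp)).isPreconnected
  exact Γ.eq_of_no_jump φ hO Γ.nodes_finite.isClosed.isOpen_compl disjoint_compl_left
    (fun s _ => hj s) (fun h => hz (Or.inl h)) (fun h => hz' (Or.inl h)) hz hz'

theorem finite_faces [Finite S] : Γ.faces.Finite := by
  obtain ⟨z₀, hz₀⟩ : (Γ.supportᶜ).Nonempty := Γ.dense_compl_support.nonempty
  refine ((Set.finite_range Γ.upper).union (Set.finite_range Γ.lower)).insert (Γ.face z₀)
    |>.subset fun f hf => ?_
  by_contra hcon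
  simp only [Set.mem_insert_iff, Set.mem_union, Set.mem_range, not_or, not_exists] at hcon
  have := Γ.eq_of_no_jump_univ (fun g => g = f)
    (fun s => propext (iff_of_false (hcon.2.1 s) (hcon.2.2 s))) hf ⟨z₀, hz₀, rfl⟩
  exact hcon.1 (this.mp rfl).symm

end SegmentGraph

/-! ### Winding functions modulo two -/

theorem sum_mul_eq_add_sum_update {ι R : Type*} [Fintype ι] [DecidableEq ι]
    [NonUnitalNonAssocSemiring R] (x y : ι → R) (i : ι) :
    ∑ j, x j * y j = x i * y i + ∑ j, update x i 0 j * y j := by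
  rw [← Finset.add_sum_erase _ _ (Finset.mem_univ i),
    ← Finset.add_sum_erase _ (fun j => update x i 0 j * y j) (Finset.mem_univ i), update_self,
    zero_mul, zero_add]
  congr 1
  exact Finset.sum_congr rfl fun j hj => by rw [update_of_ne (Finset.ne_of_mem_erase hj)]

namespace SegmentGraph

variable {S : Type*} (Γ : SegmentGraph S)

/-- The indicator of the half-open interval of abscissas of a segment that contains its left end
but not its right end, written in a form that is symmetric in the two ends. -/
noncomputable def cover (s : S) (t : ℝ) : ZMod 2 :=
  ind ((Γ.fst s).re ≤ t) + ind ((Γ.snd s).re ≤ t)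

/-- The number modulo two of endpoints of a segment with a given abscissa. -/
noncomputable def ends (s : S) (t : ℝ) : ZMod 2 :=
  ind ((Γ.fst s).re = t) + ind ((Γ.snd s).re = t)

theorem cover_of_mem_span {s : S} {t : ℝ} (ht : t ∈ Γ.span s) : Γ.cover s t = 1 := by
  rw [span, Set.uIoo, Set.mem_Ioo, inf_lt_iff, lt_sup_iff] at ht
  unfold cover ind
  split_ifs <;> first | rfl | grind

theorem cover_of_notMem {s : S} {t : ℝ} (ht : t ∉ Set.uIcc (Γ.fst s).re (Γ.snd s).re) :
    Γ.cover s t = 0 := by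
  rw [Set.mem_uIcc] at ht
  unfold cover ind
  split_ifs <;> first | rfl | grind

theorem ends_eq_zero {s : S} {t : ℝ} (h1 : (Γ.fst s).re ≠ t) (h2 : (Γ.snd s).re ≠ t) :
    Γ.ends s t = 0 := by
  simp [ends, ind_false h1, ind_false h2]

theorem ends_eq_zero_of_mem_span {s s' : S} {t : ℝ} (ht : t ∈ Γ.span s)
    (h : Γ.point s t ∈ Γ.seg s') : Γ.ends s' t = 0 := by
  obtain rfl := Γ.eq_of_point_mem_seg ht h
  exact Γ.ends_eq_zero (Γ.mem_span_iff.1 ht).2.1 (Γ.mem_span_iff.1 ht).2.2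

theorem point_mem_nodes_of_ends_ne_zero {s : S} {t : ℝ} (h : Γ.ends s t ≠ 0) :
    Γ.point s t ∈ Γ.nodes := by
  by_contra hn
  refine h (Γ.ends_eq_zero ?_ ?_) <;> rintro rfl
  · exact hn (Γ.point_fst s ▸ Γ.fst_mem s)
  · exact hn (Γ.point_snd s ▸ Γ.snd_mem s)

theorem exists_height_eq (t : ℝ) : ∃ y, ∀ s, Γ.ends s t ≠ 0 → Γ.height s t = y := by
  by_cases h : ∃ s, Γ.ends s t ≠ 0
  · obtain ⟨s₀, h₀⟩ := h
    exact ⟨Γ.height s₀ t, fun s hs => congrArg Complex.im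
      (Γ.re_injOn (Γ.point_mem_nodes_of_ends_ne_zero hs)
        (Γ.point_mem_nodes_of_ends_ne_zero h₀) rfl)⟩
  · exact ⟨0, fun s hs => (h ⟨s, hs⟩).elim⟩

theorem eventually_cover (s : S) (t₀ : ℝ) : ∀ᶠ t in 𝓝 t₀,
    Γ.cover s t = (ind ((Γ.fst s).re < t₀) + ind ((Γ.snd s).re < t₀)) +
      Γ.ends s t₀ * ind (t₀ ≤ t) := by
  have hend (a : ℝ) : ∀ᶠ t in 𝓝 t₀, ind (a ≤ t) = ind (a < t₀) + ind (a = t₀) * ind (t₀ ≤ t) := by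
    rcases lt_trichotomy a t₀ with h | rfl | h
    · filter_upwards [lt_mem_nhds h] with t ht
      simp [ind_true h, ind_true (le_of_lt ht), ind_false h.ne]
    · simp [ind]
    · filter_upwards [gt_mem_nhds h] with t ht
      simp [ind_false h.not_gt, ind_false (not_le_of_gt ht), ind_false h.ne']
  filter_upwards [hend (Γ.fst s).re, hend (Γ.snd s).re] with t h1 h2
  rw [cover, h1, h2, ends]
  ring

/-- The winding number modulo two of a chain of segments around a point: the number of segments
crossed by the vertical ray above the point. -/
noncomputable def winding [Fintype S] (x : S → ZMod 2) (p : ℂ) : ZMod 2 :=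
  ∑ s, x s * (Γ.cover s p.re * ind (p.im < Γ.height s p.re))

theorem exists_eventually_cover_mul {s : S} {p : ℂ} (hp : p ∉ Γ.seg s) :
    ∃ c, ∀ᶠ q in 𝓝 p, Γ.cover s q.re * ind (q.im < Γ.height s q.re) =
      c + Γ.ends s p.re * (ind (p.im < Γ.height s p.re) * ind (p.re ≤ q.re)) := by
  have hre := Complex.continuous_re.tendsto p
  by_cases hmem : p.re ∈ Set.uIcc (Γ.fst s).re (Γ.snd s).re
  · have hne : p.im ≠ Γ.height s p.re := fun h => hp (Γ.mem_seg_iff.2 ⟨hmem, h⟩)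
    refine ⟨(ind ((Γ.fst s).re < p.re) + ind ((Γ.snd s).re < p.re)) *
      ind (p.im < Γ.height s p.re), ?_⟩
    filter_upwards [hre.eventually (Γ.eventually_cover s p.re), eventually_ind_lt
      Complex.continuous_im.continuousAt (g := fun q => Γ.height s q.re) (by fun_prop) hne]
      with q h1 h2
    rw [h1, h2]
    ring
  · refine ⟨0, ?_⟩
    have hends : Γ.ends s p.re = 0 := Γ.ends_eq_zero
      (fun h => hmem (h ▸ Set.left_mem_uIcc)) (fun h => hmem (h ▸ Set.right_mem_uIcc))
    filter_upwards [hre.eventually (isClosed_Icc.isOpen_compl.mem_nhds hmem)] with q hq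
    rw [Γ.cover_of_notMem hq, hends, zero_mul, zero_mul, add_zero]

theorem eventually_winding_eq [Fintype S] {x : S → ZMod 2} {p : ℂ}
    (hx : ∑ s, x s * Γ.ends s p.re = 0) (hp : ∀ s, p ∈ Γ.seg s → x s = 0) :
    ∀ᶠ q in 𝓝 p, Γ.winding x q = Γ.winding x p := by
  suffices ∃ c, ∀ᶠ q in 𝓝 p, Γ.winding x q = c by
    obtain ⟨c, hc⟩ := this
    filter_upwards [hc] with q hq
    rw [hq, hc.self_of_nhds]
  obtain ⟨y, hy⟩ := Γ.exists_height_eq p.re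
  have hterm (s : S) : ∃ c, ∀ᶠ q in 𝓝 p, x s * (Γ.cover s q.re * ind (q.im < Γ.height s q.re)) =
      c + x s * Γ.ends s p.re * (ind (p.im < y) * ind (p.re ≤ q.re)) := by
    by_cases hxs : x s = 0
    · exact ⟨0, Eventually.of_forall fun q => by simp [hxs]⟩
    obtain ⟨c, hc⟩ := Γ.exists_eventually_cover_mul fun h => hxs (hp s h)
    refine ⟨x s * c, hc.mono fun q hq => ?_⟩
    rw [hq, mul_add, mul_assoc]
    by_cases hends : Γ.ends s p.re = 0
    · simp only [hends, zero_mul]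
    · rw [hy s hends]
  choose c hc using hterm
  refine ⟨∑ s, c s, ?_⟩
  filter_upwards [eventually_all.2 hc] with q hq
  rw [winding, Finset.sum_congr rfl fun s _ => hq s, Finset.sum_add_distrib, ← Finset.sum_mul,
    hx, zero_mul, add_zero]

theorem exists_eventually_winding_eq [Fintype S] {x : S → ZMod 2} {s : S} {t : ℝ}
    (hx : ∑ s', x s' * Γ.ends s' t = 0) (ht : t ∈ Γ.span s) :
    ∃ c, ∀ᶠ q in 𝓝 (Γ.point s t), Γ.winding x q = c + x s * ind (q.im < Γ.height s q.re) := by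
  classical
  refine ⟨Γ.winding (update x s 0) (Γ.point s t), ?_⟩
  have hx' : ∑ s', update x s 0 s' * Γ.ends s' (Γ.point s t).re = 0 := by
    rw [sum_mul_eq_add_sum_update x _ s, Γ.ends_eq_zero_of_mem_span ht (Γ.point_mem_seg ht),
      mul_zero, zero_add] at hx
    exact hx
  filter_upwards [Γ.eventually_winding_eq hx' fun s' hs' => by
    rw [Γ.eq_of_point_mem_seg ht hs', update_self], (Complex.continuous_re.tendsto _).eventually
      (IsOpen.mem_nhds isOpen_Ioo ht)] with q hq hre
  rw [← hq, winding, sum_mul_eq_add_sum_update x _ s, Γ.cover_of_mem_span hre, one_mul, add_comm]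
  rfl

theorem exists_eq_on_faces {α : Type*} {W : ℂ → α}
    (hW : ∀ z ∉ Γ.support, ∀ᶠ y in 𝓝 z, W y = W z) :
    ∃ φ : Set ℂ → α, ∀ z ∉ Γ.support, φ (Γ.face z) = W z := by
  refine ⟨fun f => W (invFunOn Γ.face Γ.supportᶜ f), fun z hz => ?_⟩
  have hmem : Γ.face z ∈ Γ.face '' Γ.supportᶜ := ⟨z, hz, rfl⟩
  have hface := Γ.mem_face (invFunOn_mem hmem)
  rw [invFunOn_eq hmem] at hface
  exact eq_of_isPreconnected_of_eventually_eq isPreconnected_connectedComponentIn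
    (fun y hy => nhdsWithin_le_nhds (hW y (Γ.face_subset z hy))) hface (Γ.mem_face hz)

theorem exists_potential [Fintype S] {x : S → ZMod 2} (hx : ∀ t, ∑ s, x s * Γ.ends s t = 0) :
    ∃ φ : Set ℂ → ZMod 2, (∀ s, φ (Γ.upper s) + φ (Γ.lower s) = x s) ∧
      ∀ p, (∀ s, p ∈ Γ.seg s → x s = 0) → ∀ f ∈ Γ.faces, ∀ g ∈ Γ.faces,
        p ∈ closure f → p ∈ closure g → φ f = φ g := by
  obtain ⟨φ, hφ⟩ := Γ.exists_eq_on_faces (W := Γ.winding x) fun z hz =>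
    Γ.eventually_winding_eq (hx _) fun s hs => (hz (Γ.seg_subset_support s hs)).elim
  refine ⟨φ, fun s => ?_, fun p hp => ?_⟩
  · obtain ⟨t, ht⟩ := Γ.span_nonempty s
    obtain ⟨c, hc⟩ := Γ.exists_eventually_winding_eq (hx t) ht
    obtain ⟨z, ⟨hz, hzs, hzf⟩, hwz⟩ := ((Γ.frequently_upper ht).and_eventually hc).exists
    obtain ⟨y, ⟨hy, hys, hyf⟩, hwy⟩ := ((Γ.frequently_lower ht).and_eventually hc).exists
    rw [← hzf, ← hyf, hφ z hzs, hφ y hys, hwz, hwy,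
      ind_true (P := y.im < _) hy, ind_false (not_lt_of_gt hz)]
    linear_combination CharTwo.add_self_eq_zero c
  · have hval : ∀ f ∈ Γ.faces, p ∈ closure f → φ f = Γ.winding x p := by
      rintro _ ⟨z, -, rfl⟩ hpf
      obtain ⟨q, hq, hwq⟩ := ((mem_closure_iff_frequently.1 hpf).and_eventually
        (Γ.eventually_winding_eq (hx _) hp)).exists
      rw [← hwq, ← hφ q (Γ.face_subset z hq), Γ.face_eq_of_mem hq]
    intro f hf g hg hpf hpg
    rw [hval f hf hpf, hval g hg hpg]

theorem exists_outer_face [Finite S] :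
    ∃ R : ℝ, ∃ f : Set ℂ, ∀ z : ℂ, R < ‖z‖ → z ∉ Γ.support ∧ Γ.face z = f := by
  obtain ⟨R, hRpos, hR⟩ := Γ.isCompact_support.isBounded.exists_pos_norm_le
  have hpre := isPreconnected_setOf_norm_sub_mem 0 (I := Set.Ioi R) isPreconnected_Ioi
    fun r hr => hRpos.trans hr
  simp only [sub_zero, Set.mem_Ioi] at hpre
  have hoff (z : ℂ) (hz : R < ‖z‖) : z ∉ Γ.support := fun hs => hz.not_ge (hR z hs)
  refine ⟨R, Γ.face ((R + 1 : ℝ) : ℂ), fun z hz => ⟨hoff z hz, ?_⟩⟩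
  refine Γ.face_eq_of_isPreconnected hpre hoff hz ?_
  rw [Set.mem_ofPred_eq, Complex.norm_real, Real.norm_of_nonneg (by positivity)]
  exact lt_add_one R

/-- The jump of a function of the faces across a segment. -/
noncomputable def jump [Finite S] (ψ : Set ℂ → ZMod 2) (s : S) : ZMod 2 :=
  ψ (Γ.upper s) + ψ (Γ.lower s)

theorem exists_eventually_add_winding_jump_eq [Fintype S] (ψ : Set ℂ → ZMod 2) {p : ℂ}
    (hp : ∀ w ∈ Γ.nodes, w.re ≠ p.re) : ∃ c, ∀ᶠ z in 𝓝 p, z ∉ Γ.support →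
      ψ (Γ.face z) + Γ.winding (Γ.jump ψ) z = c := by
  have hends : ∑ s, Γ.jump ψ s * Γ.ends s p.re = 0 := Finset.sum_eq_zero fun s _ => by
    rw [Γ.ends_eq_zero (hp _ (Γ.fst_mem s)) (hp _ (Γ.snd_mem s)), mul_zero]
  by_cases hps : p ∈ Γ.support
  · have hpn : p ∉ Γ.nodes := fun h => hp p h rfl
    obtain ⟨s, hs⟩ := Set.mem_iUnion.1 (hps.resolve_left hpn)
    have ht := Γ.re_mem_span hs hpn
    obtain ⟨c, hc⟩ := Γ.exists_eventually_winding_eq hends ht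
    have hup := Γ.eventually_upper ht
    have hlow := Γ.eventually_lower ht
    rw [Γ.point_re hs] at hc hup hlow
    refine ⟨ψ (Γ.upper s) + c, ?_⟩
    filter_upwards [hc, hup, hlow, (Complex.continuous_re.tendsto p).eventually
      (IsOpen.mem_nhds isOpen_Ioo ht)] with z hz hzup hzlow hre hzs
    rw [hz]
    rcases lt_trichotomy z.im (Γ.height s z.re) with h | h | h
    · rw [(hzlow h).2, ind_true h, jump]
      linear_combination CharTwo.add_self_eq_zero (ψ (Γ.lower s))
    · exact (hzs (Γ.seg_subset_support s
        (Γ.mem_seg_iff.2 ⟨Set.uIoo_subset_uIcc_self hre, h⟩))).elim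
    · rw [(hzup h).2, ind_false h.not_gt, mul_zero, add_zero]
  · refine ⟨ψ (Γ.face p) + Γ.winding (Γ.jump ψ) p, ?_⟩
    filter_upwards [Γ.eventually_face_eq hps, Γ.eventually_winding_eq hends fun s hs =>
      (hps (Γ.seg_subset_support s hs)).elim] with z h1 h2 _
    rw [h1, h2]

theorem add_winding_jump_eq [Fintype S] (ψ : Set ℂ → ZMod 2) {z z' : ℂ} (hre : z.re = z'.re)
    (hn : ∀ w ∈ Γ.nodes, w.re ≠ z.re) (hz : z ∉ Γ.support) (hz' : z' ∉ Γ.support) :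
    ψ (Γ.face z) + Γ.winding (Γ.jump ψ) z = ψ (Γ.face z') + Γ.winding (Γ.jump ψ) z' := by
  obtain ⟨t, y⟩ := z
  obtain ⟨t, y'⟩ := z'
  obtain rfl : _ = t := hre
  refine eq_of_isPreconnected_of_eventually_eq_off isPreconnected_univ isOpen_univ
    ((Γ.finite_setOf_mk_mem_support t).countable.dense_compl ℝ)
    (f := fun y => ψ (Γ.face ⟨t, y⟩) + Γ.winding (Γ.jump ψ) ⟨t, y⟩) (fun y _ => ?_)
    trivial trivial hz hz'
  obtain ⟨c, hc⟩ := Γ.exists_eventually_add_winding_jump_eq ψ (p := ⟨t, y⟩) hn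
  exact ⟨c, ((continuous_complex_mk continuous_const continuous_id).tendsto y).eventually hc⟩

theorem sum_jump_cover [Fintype S] (ψ : Set ℂ → ZMod 2) {t : ℝ} (ht : ∀ w ∈ Γ.nodes, w.re ≠ t) :
    ∑ s, Γ.jump ψ s * Γ.cover s t = 0 := by
  obtain ⟨R, f, hR⟩ := Γ.exists_outer_face
  obtain ⟨Y, hY, hRY⟩ : ∃ Y, (∀ s, |Γ.height s t| < Y) ∧ R < |Y| := by
    have hheight : ∀ᶠ Y in atTop, ∀ s, |Γ.height s t| < Y :=
      eventually_all.2 fun s => eventually_gt_atTop _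
    exact (hheight.and (tendsto_abs_atTop_atTop.eventually_gt_atTop R)).exists
  have htop := hR ⟨t, Y⟩ (hRY.trans_le (Complex.abs_im_le_norm ⟨t, Y⟩))
  have hbot := hR ⟨t, -Y⟩ ((abs_neg Y ▸ hRY).trans_le (Complex.abs_im_le_norm ⟨t, -Y⟩))
  have hline := Γ.add_winding_jump_eq ψ (z := ⟨t, -Y⟩) (z' := ⟨t, Y⟩) rfl ht hbot.1 htop.1
  rw [hbot.2, htop.2, add_right_inj] at hline
  have hlt (s : S) : ind (-Y < Γ.height s t) = 1 := ind_true (abs_lt.1 (hY s)).1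
  have hgt (s : S) : ind (Y < Γ.height s t) = 0 := ind_false (abs_lt.1 (hY s)).2.not_gt
  simpa only [winding, hlt, hgt, mul_one, mul_zero, Finset.sum_const_zero] using hline

theorem sum_jump_ends [Fintype S] (ψ : Set ℂ → ZMod 2) (t : ℝ) :
    ∑ s, Γ.jump ψ s * Γ.ends s t = 0 := by
  have hnodes : ∀ᶠ t' in 𝓝[≠] t, ∀ w ∈ Γ.nodes, w.re ≠ t' := by
    filter_upwards [nhdsNE_le_cofinite t
      (Γ.nodes_finite.image Complex.re).compl_mem_cofinite] with t' h w hw hwt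
    exact h ⟨w, hw, hwt⟩
  have hcover := hnodes.and (nhdsWithin_le_nhds (eventually_all.2 fun s => Γ.eventually_cover s t))
  obtain ⟨t', ⟨hn', hc'⟩, ht' : t' < t⟩ :=
    ((hcover.filter_mono (nhdsLT_le_nhdsNE t)).and self_mem_nhdsWithin).exists
  obtain ⟨t'', ⟨hn'', hc''⟩, ht'' : t < t''⟩ :=
    ((hcover.filter_mono (nhdsGT_le_nhdsNE t)).and self_mem_nhdsWithin).exists
  have hdiff : ∑ s, Γ.jump ψ s * Γ.cover s t'' - ∑ s, Γ.jump ψ s * Γ.cover s t' = 0 := by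
    rw [Γ.sum_jump_cover ψ hn'', Γ.sum_jump_cover ψ hn', sub_zero]
  rw [← hdiff, ← Finset.sum_sub_distrib]
  refine Finset.sum_congr rfl fun s _ => ?_
  rw [hc', hc'', ind_true ht''.le, ind_false ht'.not_ge]
  ring

/-! ### Faces at a node -/

theorem exists_seg_eq_segment {w : ℂ} (hw : w ∈ Γ.nodes) {s : S} (hs : w ∈ Γ.seg s) :
    ∃ v ∈ Γ.nodes, v ≠ w ∧ Γ.seg s = segment ℝ w v := by
  rcases Γ.node_mem w hw s hs with rfl | rfl
  · exact ⟨Γ.snd s, Γ.snd_mem s, (Γ.fst_ne_snd s).symm, rfl⟩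
  · exact ⟨Γ.fst s, Γ.fst_mem s, Γ.fst_ne_snd s, segment_symm ..⟩

theorem exists_cone [Finite S] {w : ℂ} (hw : w ∈ Γ.nodes) : ∃ r > 0, ∀ z ∈ Metric.ball w r,
    z ∉ Γ.support → ∀ c : ℝ, 0 < c → c ≤ 1 → w + c • (z - w) ∉ Γ.support := by
  obtain ⟨r, hr, hball⟩ := Metric.eventually_nhds_iff_ball.1 (Γ.eventually_mem_imp w)
  refine ⟨r, hr, fun z hz hzs c hc hc1 hmem => ?_⟩
  have hzw : z ≠ w := fun h => hzs (Or.inl (h ▸ hw))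
  have hcz : w + c • (z - w) ∈ Metric.ball w r := by
    rw [Metric.mem_ball, dist_eq_norm] at hz ⊢
    rw [add_sub_cancel_left, norm_smul, Real.norm_of_nonneg hc.le]
    exact (mul_le_of_le_one_left (norm_nonneg _) hc1).trans_lt hz
  rcases hmem with hnode | hseg
  · have := (hball _ hcz).1 hnode
    simp [hc.ne', sub_eq_zero, hzw] at this
  · obtain ⟨s, hs⟩ := Set.mem_iUnion.1 hseg
    obtain ⟨v, hv, hvw, hsv⟩ := Γ.exists_seg_eq_segment hw ((hball _ hcz).2 s hs)
    have hrv : r ≤ ‖v - w‖ := not_lt.1 fun hlt =>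
      hvw ((hball v (by rwa [Metric.mem_ball, dist_eq_norm])).1 hv)
    rw [Metric.mem_ball, dist_eq_norm] at hz
    refine hzs (Γ.seg_subset_support s ?_)
    rw [hsv] at hs ⊢
    exact mem_segment_of_add_smul_mem_segment hc (hz.le.trans hrv) hs

theorem exists_segment_subset_insert [Finite S] {w : ℂ} (hw : w ∈ Γ.nodes) {f : Set ℂ}
    (hf : f ∈ Γ.faces) (hwf : w ∈ closure f) : ∃ p ∈ f, segment ℝ w p ⊆ insert w f := by
  obtain ⟨r, hr, hcone⟩ := Γ.exists_cone hw
  obtain ⟨q, -, rfl⟩ := hf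
  obtain ⟨p, hpf, hp⟩ := Metric.mem_closure_iff.1 hwf r hr
  rw [_root_.dist_comm] at hp
  refine ⟨p, hpf, ?_⟩
  have hpre : IsPreconnected ((fun c : ℝ => w + c • (p - w)) '' Set.Ioc 0 1) :=
    isPreconnected_Ioc.image _ (by fun_prop)
  have hsub : ((fun c : ℝ => w + c • (p - w)) '' Set.Ioc 0 1) ⊆ Γ.face p := by
    refine hpre.subset_connectedComponentIn ⟨1, by simp, by simp⟩ ?_
    rintro _ ⟨c, hc, rfl⟩
    exact hcone p hp (Γ.face_subset q hpf) c hc.1 hc.2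
  rw [Γ.face_eq_of_mem hpf] at hsub
  rw [segment_eq_image']
  rintro _ ⟨c, hc, rfl⟩
  rcases hc.1.eq_or_lt with rfl | h
  · simp
  · exact Or.inr (hsub ⟨c, ⟨h, hc.2⟩, rfl⟩)

theorem face_eq_of_node [Finite S] {w : ℂ} (hw : w ∈ Γ.nodes)
    (hs : ∀ s, w ∈ Γ.seg s → Γ.upper s = Γ.lower s) {f g : Set ℂ} (hf : f ∈ Γ.faces)
    (hg : g ∈ Γ.faces) (hwf : w ∈ closure f) (hwg : w ∈ closure g) : f = g := by
  obtain ⟨r, hr, hball⟩ := Metric.eventually_nhds_iff_ball.1 (Γ.eventually_mem_imp w)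
  have hpre := isPreconnected_setOf_norm_sub_mem w (I := Set.Ioo 0 r) isPreconnected_Ioo
    fun _ h => h.1
  have hopen : IsOpen {z : ℂ | ‖z - w‖ ∈ Set.Ioo 0 r} := isOpen_Ioo.preimage (by fun_prop)
  have hann : ∀ z ∈ Metric.ball w r, z ∉ Γ.support → z ∈ {z : ℂ | ‖z - w‖ ∈ Set.Ioo 0 r} := by
    intro z hz hzs
    rw [Metric.mem_ball, dist_eq_norm] at hz
    exact ⟨norm_pos_iff.2 (sub_ne_zero.2 fun h => hzs (Or.inl (h ▸ hw))), hz⟩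
  obtain ⟨p, hp, hpw⟩ := mem_closure_iff_nhds.1 hwf _ (Metric.ball_mem_nhds w hr)
  obtain ⟨q, hq, hqw⟩ := mem_closure_iff_nhds.1 hwg _ (Metric.ball_mem_nhds w hr)
  obtain ⟨p', -, rfl⟩ := hf
  obtain ⟨q', -, rfl⟩ := hg
  rw [← Γ.face_eq_of_mem hpw, ← Γ.face_eq_of_mem hqw]
  have hps := Γ.face_subset _ hpw
  have hqs := Γ.face_subset _ hqw
  refine Γ.eq_of_no_jump id hpre hopen ?_ ?_ (hann p hp hps) (hann q hq hqs) hps hqs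
  · refine Set.disjoint_left.2 fun z hz hn => ?_
    obtain rfl := (hball z (by rw [Metric.mem_ball, dist_eq_norm]; exact hz.2)).1 hn
    simp at hz
  · rintro s ⟨z, hzs, hz⟩
    exact hs s ((hball z (by rw [Metric.mem_ball, dist_eq_norm]; exact hz.2)).2 s hzs)

end SegmentGraph

theorem eq_or_eq_of_forall_add_eq {α : Type*} {a b c d : α}
    (h : ∀ ψ : α → ZMod 2, ψ a + ψ b = ψ c + ψ d) :
    (a = b ∧ c = d) ∨ (a = c ∧ b = d) ∨ (a = d ∧ b = c) := by
  by_cases hab : a = b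
  · subst hab
    refine Or.inl ⟨rfl, ?_⟩
    by_contra hcd
    simpa [ind, CharTwo.add_self_eq_zero, Ne.symm hcd] using h fun x => ind (x = c)
  · have ha := h fun x => ind (x = a)
    have hb := h fun x => ind (x = b)
    simp only [ind, if_true, hab, Ne.symm hab, if_false, add_zero, zero_add] at ha hb
    grind

namespace SegmentGraph

variable {S : Type*} (Γ : SegmentGraph S)

/-- The set of the faces above and below a segment; it has one element for a bridge. -/
def sides [Finite S] (s : S) : Set (Set ℂ) := {Γ.upper s, Γ.lower s}

theorem seg_subset_closure_of_mem_sides [Finite S] {s : S} {f : Set ℂ} (hf : f ∈ Γ.sides s) :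
    Γ.seg s ⊆ closure f := by
  rcases hf with rfl | rfl
  · exact Γ.seg_subset_closure_upper s
  · exact Γ.seg_subset_closure_lower s

theorem ends_re {w : ℂ} (hw : w ∈ Γ.nodes) (s : S) : Γ.ends s w.re = ind (w ∈ Γ.seg s) := by
  by_cases h : w ∈ Γ.seg s
  · rw [ind_true h, ends]
    rcases Γ.node_mem w hw s h with rfl | rfl
    · rw [ind_true rfl, ind_false (Γ.re_ne s).symm, add_zero]
    · rw [ind_true rfl, ind_false (Γ.re_ne s), zero_add]
  · rw [ind_false h]
    refine Γ.ends_eq_zero (fun hre => h ?_) (fun hre => h ?_)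
    · exact Γ.re_injOn (Γ.fst_mem s) hw hre ▸ left_mem_segment ..
    · exact Γ.re_injOn (Γ.snd_mem s) hw hre ▸ right_mem_segment ..

theorem jump_eq_of_node [Finite S] {w : ℂ} (hw : w ∈ Γ.nodes) {s s' : S} (hne : s ≠ s')
    (h : ∀ s'', w ∈ Γ.seg s'' ↔ s'' = s ∨ s'' = s') (ψ : Set ℂ → ZMod 2) :
    Γ.jump ψ s = Γ.jump ψ s' := by
  classical
  have := Fintype.ofFinite S
  have hsum := Γ.sum_jump_ends ψ w.re
  simp only [Γ.ends_re hw, h] at hsum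
  rw [Finset.sum_eq_add_of_mem s s' (Finset.mem_univ _) (Finset.mem_univ _) hne
    fun s'' _ hs'' => by rw [ind_false (not_or.2 hs''), mul_zero],
    ind_true (Or.inl rfl), ind_true (Or.inr rfl), mul_one, mul_one] at hsum
  exact CharTwo.add_eq_zero.1 hsum

theorem sides_eq_of_node [Finite S] {w : ℂ} (hw : w ∈ Γ.nodes) {s s' : S} (hne : s ≠ s')
    (h : ∀ s'', w ∈ Γ.seg s'' ↔ s'' = s ∨ s'' = s') : Γ.sides s = Γ.sides s' := by
  rcases eq_or_eq_of_forall_add_eq (Γ.jump_eq_of_node hw hne h) with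
    ⟨hs, hs'⟩ | ⟨hup, hlow⟩ | ⟨hup, hlow⟩
  · have hface : Γ.upper s = Γ.upper s' := by
      refine Γ.face_eq_of_node hw (fun s'' hs'' => ?_) (Γ.upper_mem_faces s) (Γ.upper_mem_faces s')
        (Γ.seg_subset_closure_upper s ((h s).2 (Or.inl rfl)))
        (Γ.seg_subset_closure_upper s' ((h s').2 (Or.inr rfl)))
      rcases (h s'').1 hs'' with rfl | rfl
      exacts [hs, hs']
    rw [sides, sides, ← hs, ← hs', hface]
  · rw [sides, sides, hup, hlow]
  · rw [sides, sides, hup, hlow, Set.pair_comm]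

end SegmentGraph

/-! ### Simple polygonal lines -/

theorem mem_segment_or_mem_segment_of_mem {E : Type*} [AddCommGroup E] [Module ℝ E] {x y w z : E}
    (hx : z ∈ segment ℝ x y) (hw : z ∈ segment ℝ y w) (hz : z ≠ y) :
    x ∈ segment ℝ y w ∨ w ∈ segment ℝ x y := by
  rw [segment_symm ℝ x y] at hx ⊢
  simp only [mem_segment_iff_wbtw] at hx hw ⊢
  refine wbtw_total_of_sameRay_vsub_left (hx.sameRay_vsub_left.symm.trans hw.sameRay_vsub_left ?_)
  exact fun h => (vsub_ne_zero.2 hz h).elim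

theorem segment_subset_of_mem_segment {E : Type*} [AddCommGroup E] [Module ℝ E] {x y w z : E}
    {S : Set E} (hxy : segment ℝ x y ⊆ S) (hyw : segment ℝ y w ⊆ S) (hx : z ∈ segment ℝ x y)
    (hw : z ∈ segment ℝ y w) (hz : z ≠ y) : segment ℝ x w ⊆ S := by
  rcases mem_segment_or_mem_segment_of_mem hx hw hz with h | h
  · exact ((convex_segment y w).segment_subset h (right_mem_segment ..)).trans hyw
  · exact ((convex_segment x y).segment_subset (left_mem_segment ..) h).trans hxy

theorem le_add_length_of_length_eq_dist {α : Type*} {G : SimpleGraph α} {a b : α} {p : G.Walk a b}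
    (hp : p.length = G.dist a b) {i j : ℕ} (hj : j ≤ p.length)
    (q : G.Walk (p.getVert i) (p.getVert j)) : j ≤ i + q.length := by
  have h := dist_le ((p.take i).append (q.append (p.drop j)))
  rw [← hp, Walk.length_append, Walk.length_append, Walk.take_length, Walk.drop_length] at h
  lia

/-- The graph on the points of a real vector space in which two points are adjacent if the segment
between them lies in the set `S`. Its walks are the polygonal lines in `S`. -/
def visibilityGraph {E : Type*} [AddCommGroup E] [Module ℝ E] (S : Set E) : SimpleGraph E where
  Adj x y := x ≠ y ∧ segment ℝ x y ⊆ S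
  symm := ⟨fun x y h => ⟨h.1.symm, segment_symm ℝ x y ▸ h.2⟩⟩
  loopless := ⟨fun _ h => h.1 rfl⟩

/-- The polygonal line with the corners `p 0, …, p k`. -/
def polyline {E : Type*} [AddCommGroup E] [Module ℝ E] (k : ℕ) (p : ℕ → E) : Set E :=
  ⋃ i < k, segment ℝ (p i) (p (i + 1))

/-- The corners `p 0, …, p k` are distinct and the segments between consecutive corners meet only
in the common corner of two consecutive ones. -/
structure IsSimplePolyline {E : Type*} [AddCommGroup E] [Module ℝ E] (k : ℕ) (p : ℕ → E) :
    Prop where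
  injOn : (Set.Iic k).InjOn p
  inter : ∀ i j, i < j → j < k → ∀ z ∈ segment ℝ (p i) (p (i + 1)),
    z ∈ segment ℝ (p j) (p (j + 1)) → j = i + 1 ∧ z = p j

section Polyline

variable {E : Type*} [AddCommGroup E] [Module ℝ E]

theorem visibilityGraph_mono {S T : Set E} (h : S ⊆ T) : visibilityGraph S ≤ visibilityGraph T :=
  fun _ _ hxy => ⟨hxy.1, hxy.2.trans h⟩

theorem exists_walk_length_le_one {S : Set E} {x y : E} (h : segment ℝ x y ⊆ S) :
    ∃ q : (visibilityGraph S).Walk x y, q.length ≤ 1 := by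
  rcases eq_or_ne x y with rfl | hxy
  · exact ⟨.nil, zero_le_one⟩
  · exact ⟨.cons ⟨hxy, h⟩ .nil, le_rfl⟩

theorem reachable_of_segment_subset {S : Set E} {x y : E} (h : segment ℝ x y ⊆ S) :
    (visibilityGraph S).Reachable x y :=
  (exists_walk_length_le_one h).nonempty

variable {k : ℕ} {p : ℕ → E}

theorem segment_subset_polyline {i : ℕ} (hi : i < k) :
    segment ℝ (p i) (p (i + 1)) ⊆ polyline k p :=
  Set.subset_iUnion₂_of_subset i hi subset_rfl

theorem mem_polyline (hk : 0 < k) {i : ℕ} (hi : i ≤ k) : p i ∈ polyline k p := by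
  obtain ⟨k, rfl⟩ := Nat.exists_eq_succ_of_ne_zero hk.ne'
  rcases hi.lt_or_eq with hi | rfl
  · exact segment_subset_polyline hi (left_mem_segment ..)
  · exact segment_subset_polyline k.lt_succ_self (right_mem_segment ..)

theorem polyline_succ : polyline (k + 1) p = polyline k p ∪ segment ℝ (p k) (p (k + 1)) :=
  Set.biUnion_lt_succ (fun i => segment ℝ (p i) (p (i + 1))) k

theorem reachable_polyline : (visibilityGraph (polyline k p)).Reachable (p 0) (p k) := by
  induction k with
  | zero => exact .rfl
  | succ k ih =>
    rw [polyline_succ]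
    exact (ih.mono (visibilityGraph_mono Set.subset_union_left)).trans
      (reachable_of_segment_subset Set.subset_union_right)

-- A walk of minimal length admits no shortcut, hence does not intersect itself.
theorem isSimplePolyline_getVert {S : Set E} {a b : E} {q : (visibilityGraph S).Walk a b}
    (hq : q.length = (visibilityGraph S).dist a b) : IsSimplePolyline q.length q.getVert := by
  have hseg {i : ℕ} (hi : i < q.length) : segment ℝ (q.getVert i) (q.getVert (i + 1)) ⊆ S :=
    (q.adj_getVert_succ hi).2
  refine ⟨(q.isPath_of_length_eq_dist hq).getVert_injOn, fun i j hij hj z hz hz' => ?_⟩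
  have hi := hij.trans hj
  have hji : j = i + 1 := by
    obtain ⟨q₁, hq₁⟩ := exists_walk_length_le_one <|
      ((convex_segment _ _).segment_subset (left_mem_segment ..) hz).trans (hseg hi)
    obtain ⟨q₂, hq₂⟩ := exists_walk_length_le_one <|
      ((convex_segment _ _).segment_subset hz' (right_mem_segment ..)).trans (hseg hj)
    have h := le_add_length_of_length_eq_dist hq hj (q₁.append q₂)
    rw [Walk.length_append] at h
    lia
  subst hji
  refine ⟨rfl, of_not_not fun hne => ?_⟩
  obtain ⟨r, hr⟩ := exists_walk_length_le_one <|
    segment_subset_of_mem_segment (hseg hi) (hseg hj) hz hz' hne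
  have h := le_add_length_of_length_eq_dist hq hj r
  lia

theorem exists_isSimplePolyline {S : Set E} {a b : E} (h : (visibilityGraph S).Reachable a b) :
    ∃ k p, IsSimplePolyline k p ∧ p 0 = a ∧ p k = b ∧ polyline k p ⊆ S := by
  obtain ⟨q, hq⟩ := h.exists_walk_length_eq_dist
  exact ⟨q.length, q.getVert, isSimplePolyline_getVert hq, q.getVert_zero, q.getVert_length,
    Set.iUnion₂_subset fun i hi => (q.adj_getVert_succ hi).2⟩

namespace IsSimplePolyline

theorem eq_or_eq_of_mem (h : IsSimplePolyline k p) {i j : ℕ} (hi : i < k) (hj : j ≤ k)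
    (hmem : p j ∈ segment ℝ (p i) (p (i + 1))) : j = i ∨ j = i + 1 := by
  have hinj {m : ℕ} (hm : m ≤ k) (heq : p j = p m) : j = m := h.injOn hj hm heq
  rcases lt_trichotomy j i with hji | rfl | hij
  · exact Or.inl (hinj hi.le (h.inter j i hji hi _ (left_mem_segment ..) hmem).2)
  · exact Or.inl rfl
  rcases hj.lt_or_eq with hj | rfl
  · exact Or.inr (h.inter i j hij hj _ hmem (left_mem_segment ..)).1
  obtain ⟨m, rfl⟩ := Nat.exists_eq_succ_of_ne_zero (Nat.ne_zero_of_lt hij)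
  rcases (Nat.le_of_lt_succ hij).eq_or_lt with rfl | him
  · exact Or.inr rfl
  · have heq := (h.inter i m him m.lt_succ_self _ hmem (right_mem_segment ..)).2
    exact absurd (hinj m.le_succ heq) m.succ_ne_self

theorem of_succ (h : IsSimplePolyline (k + 1) p) : IsSimplePolyline k p :=
  ⟨h.injOn.mono (Set.Iic_subset_Iic.2 k.le_succ),
    fun i j hij hj => h.inter i j hij (hj.trans k.lt_succ_self)⟩

end IsSimplePolyline

end Polyline

/-- The set `A` is the image of an injective path from `a` to `b`. -/
def IsArc {X : Type*} [TopologicalSpace X] (A : Set X) (a b : X) : Prop :=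
  ∃ γ : Path a b, Injective γ ∧ Set.range γ = A

namespace IsArc

variable {X : Type*} [TopologicalSpace X] {A B : Set X} {a b c : X}

theorem symm (h : IsArc A a b) : IsArc A b a := by
  obtain ⟨γ, hγ, rfl⟩ := h
  exact ⟨γ.symm, hγ.comp unitInterval.symm_bijective.injective, γ.symm_range⟩

theorem union (hA : IsArc A a b) (hB : IsArc B b c) (hAB : A ∩ B ⊆ {b}) :
    IsArc (A ∪ B) a c := by
  obtain ⟨γ, hγ, rfl⟩ := hA
  obtain ⟨δ, hδ, rfl⟩ := hB
  have hmeet {s t : unitInterval} (h : γ s = δ t) : t = 0 :=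
    hδ ((hAB ⟨⟨s, h⟩, ⟨t, rfl⟩⟩ : δ t = b).trans δ.source.symm)
  refine ⟨γ.trans δ, fun s t h => Subtype.ext ?_, γ.trans_range δ⟩
  rw [Path.trans_apply, Path.trans_apply] at h
  split_ifs at h with hs ht ht
  · linarith [Subtype.mk.inj (hγ h)]
  · linarith [Subtype.mk.inj (hmeet h)]
  · linarith [Subtype.mk.inj (hmeet h.symm)]
  · linarith [Subtype.mk.inj (hδ h)]

theorem exists_continuousOn (h : IsArc A a b) : ∃ γ : ℝ → X, ContinuousOn γ (Set.Icc 0 1) ∧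
    Set.InjOn γ (Set.Icc 0 1) ∧ γ 0 = a ∧ γ 1 = b ∧ A = γ '' Set.Icc 0 1 := by
  obtain ⟨γ, hγ, rfl⟩ := h
  refine ⟨γ.extend, γ.continuous_extend.continuousOn, fun s hs t ht hst => ?_, γ.extend_zero,
    γ.extend_one, (γ.image_extend_of_subset subset_rfl).symm⟩
  rw [γ.extend_apply hs, γ.extend_apply ht] at hst
  exact Subtype.mk.inj (hγ hst)

end IsArc

section Arc

variable {E : Type*} [NormedAddCommGroup E] [NormedSpace ℝ E]

theorem isArc_segment {a b : E} (h : a ≠ b) : IsArc (segment ℝ a b) a b :=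
  ⟨Path.segment a b, fun _ _ hst => Subtype.ext (AffineMap.lineMap_injective ℝ h hst),
    Path.range_segment a b⟩

theorem IsSimplePolyline.isArc {k : ℕ} {p : ℕ → E} (h : IsSimplePolyline k p) (hk : 0 < k) :
    IsArc (polyline k p) (p 0) (p k) := by
  have harc {i : ℕ} (hi : i < k) : IsArc (segment ℝ (p i) (p (i + 1))) (p i) (p (i + 1)) :=
    isArc_segment fun heq => i.succ_ne_self (h.injOn hi.le hi heq).symm
  induction k, hk using Nat.le_induction with
  | base => simpa [polyline] using harc zero_lt_one
  | succ k _ ih =>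
    rw [polyline_succ]
    refine (ih h.of_succ fun hi => harc (hi.trans k.lt_succ_self)).union (harc k.lt_succ_self) ?_
    rintro z ⟨hz, hz'⟩
    obtain ⟨i, hi, hz⟩ := Set.mem_iUnion₂.1 hz
    exact (h.inter i k hi k.lt_succ_self z hz hz').2

end Arc

/-! ### Polygonal drawings -/

/-- A drawing of a graph in the plane whose edges are simple polygonal lines. The edge `e` runs
from the vertex `src e` to the vertex `tgt e` and has the corners `pt e i` for `i ≤ len e`. The
values `pt e i` for `i > len e` are irrelevant. -/
structure PolyDrawing (G : SimpleGraph V) where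
  vtx : V → ℂ
  src : G.edgeSet → V
  tgt : G.edgeSet → V
  len : G.edgeSet → ℕ
  pt : G.edgeSet → ℕ → ℂ
  mk_eq : ∀ e, s(src e, tgt e) = e.1
  vtx_inj : Injective vtx
  pt_zero : ∀ e, pt e 0 = vtx (src e)
  pt_len : ∀ e, pt e (len e) = vtx (tgt e)
  isSimplePolyline : ∀ e, IsSimplePolyline (len e) (pt e)
  inter : ∀ e e', e ≠ e' → polyline (len e) (pt e) ∩ polyline (len e') (pt e') ⊆ Set.range vtx
  mem_of_vtx_mem : ∀ e v, vtx v ∈ polyline (len e) (pt e) → v ∈ e.1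

namespace PolyDrawing

variable {G : SimpleGraph V} (D : PolyDrawing G)

/-- The vertices and corners of a polygonal drawing. -/
def nodes : Set ℂ := Set.range D.vtx ∪ ⋃ e, D.pt e '' Set.Iic (D.len e)

theorem finite_nodes [Finite V] [Finite G.edgeSet] : D.nodes.Finite :=
  (Set.finite_range _).union (Set.finite_iUnion fun e => (Set.finite_Iic (D.len e)).image _)

theorem vtx_mem_nodes (v : V) : D.vtx v ∈ D.nodes := Or.inl ⟨v, rfl⟩

theorem pt_mem_nodes (e : G.edgeSet) {i : ℕ} (hi : i ≤ D.len e) : D.pt e i ∈ D.nodes :=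
  Or.inr (Set.mem_iUnion.2 ⟨e, i, hi, rfl⟩)

theorem adj_src_tgt (e : G.edgeSet) : G.Adj (D.src e) (D.tgt e) := by
  rw [← mem_edgeSet, D.mk_eq]
  exact e.2

theorem len_pos (e : G.edgeSet) : 0 < D.len e := by
  refine Nat.pos_of_ne_zero fun h => (D.adj_src_tgt e).ne (D.vtx_inj ?_)
  rw [← D.pt_zero, ← D.pt_len, h]

theorem pt_ne (e : G.edgeSet) {i : ℕ} (hi : i < D.len e) : D.pt e i ≠ D.pt e (i + 1) :=
  fun h => i.succ_ne_self ((D.isSimplePolyline e).injOn hi.le hi h).symm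

theorem mem_edge_iff {e : G.edgeSet} {v : V} : v ∈ e.1 ↔ v = D.src e ∨ v = D.tgt e := by
  rw [← D.mk_eq e, Sym2.mem_iff]

theorem eq_zero_or_eq_len_of_pt_mem_range {e : G.edgeSet} {i : ℕ} (hi : i ≤ D.len e)
    (h : D.pt e i ∈ Set.range D.vtx) : i = 0 ∨ i = D.len e := by
  obtain ⟨v, hv⟩ := h
  have hmem := D.mem_of_vtx_mem e v (hv ▸ mem_polyline (D.len_pos e) hi)
  refine (D.mem_edge_iff.1 hmem).imp (fun hsrc => ?_) fun htgt => ?_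
  · exact (D.isSimplePolyline e).injOn hi (Nat.zero_le _) (by rw [← hv, hsrc, D.pt_zero])
  · exact (D.isSimplePolyline e).injOn hi Set.self_mem_Iic (by rw [← hv, htgt, D.pt_len])

theorem vtx_eq_or_eq_of_mem_segment {e : G.edgeSet} {i : ℕ} (hi : i < D.len e) {v : V}
    (h : D.vtx v ∈ segment ℝ (D.pt e i) (D.pt e (i + 1))) :
    D.vtx v = D.pt e i ∨ D.vtx v = D.pt e (i + 1) := by
  obtain ⟨j, hj, hv⟩ : ∃ j ≤ D.len e, D.vtx v = D.pt e j := by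
    rcases D.mem_edge_iff.1 (D.mem_of_vtx_mem e v (segment_subset_polyline hi h)) with rfl | rfl
    · exact ⟨0, Nat.zero_le _, (D.pt_zero e).symm⟩
    · exact ⟨D.len e, le_rfl, (D.pt_len e).symm⟩
  rw [hv] at h ⊢
  exact ((D.isSimplePolyline e).eq_or_eq_of_mem hi hj h).imp (congrArg _) (congrArg _)

theorem ind_mem_edge (e : G.edgeSet) (v : V) :
    ind (v ∈ e.1) = ind (D.src e = v) + ind (D.tgt e = v) := by
  have hne := (D.adj_src_tgt e).ne
  rw [D.mem_edge_iff]
  simp only [ind]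
  split_ifs <;> grind

/-- The straight-line plane graph made of the segments of a polygonal drawing. -/
noncomputable def segmentGraph [Finite V] [Finite G.edgeSet] (hre : D.nodes.InjOn Complex.re) :
    SegmentGraph (Σ e : G.edgeSet, Fin (D.len e)) where
  fst s := D.pt s.1 s.2
  snd s := D.pt s.1 (s.2 + 1)
  nodes := D.nodes
  nodes_finite := D.finite_nodes
  fst_mem s := D.pt_mem_nodes s.1 s.2.2.le
  snd_mem s := D.pt_mem_nodes s.1 s.2.2
  fst_ne_snd s := D.pt_ne s.1 s.2.2
  re_injOn := hre
  inter := by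
    rintro ⟨e, i⟩ ⟨e', j⟩ hne z hz hz'
    by_cases he : e = e'
    · subst he
      rcases lt_trichotomy (i : ℕ) j with h | h | h
      · rw [((D.isSimplePolyline e).inter i j h j.2 z hz hz').2]
        exact D.pt_mem_nodes e j.2.le
      · exact absurd (by rw [Fin.ext h]) hne
      · rw [((D.isSimplePolyline e).inter j i h i.2 z hz' hz).2]
        exact D.pt_mem_nodes e i.2.le
    · exact Or.inl (D.inter e e' he
        ⟨segment_subset_polyline i.2 hz, segment_subset_polyline j.2 hz'⟩)
  node_mem := by
    rintro w (⟨v, rfl⟩ | hw) ⟨e, i⟩ hwi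
    · exact D.vtx_eq_or_eq_of_mem_segment i.2 hwi
    obtain ⟨e', j, hj, rfl⟩ := Set.mem_iUnion.1 hw
    by_cases he : e = e'
    · subst he
      exact ((D.isSimplePolyline e).eq_or_eq_of_mem i.2 hj hwi).imp (congrArg _) (congrArg _)
    · obtain ⟨v, hv⟩ := D.inter e e' he
        ⟨segment_subset_polyline i.2 hwi, mem_polyline (D.len_pos e') hj⟩
      rw [← hv] at hwi ⊢
      exact D.vtx_eq_or_eq_of_mem_segment i.2 hwi

section Chains

variable [Finite V] [Fintype G.edgeSet] (hre : D.nodes.InjOn Complex.re)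

theorem sum_ends (x : G.edgeSet → ZMod 2) (t : ℝ) :
    ∑ s, x s.1 * (D.segmentGraph hre).ends s t =
      ∑ e, x e * (ind ((D.vtx (D.src e)).re = t) + ind ((D.vtx (D.tgt e)).re = t)) := by
  rw [Fintype.sum_sigma]
  refine Finset.sum_congr rfl fun e _ => (Finset.mul_sum _ _ (x e)).symm.trans ?_
  rw [← D.pt_zero, ← D.pt_len]
  congr 1
  calc ∑ i : Fin (D.len e), (ind ((D.pt e i).re = t) + ind ((D.pt e (i + 1)).re = t))
      = ∑ i ∈ Finset.range (D.len e),
          (ind ((D.pt e (i + 1)).re = t) - ind ((D.pt e i).re = t)) := by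
        simp only [CharTwo.sub_eq_add, add_comm, ← Fin.sum_univ_eq_sum_range
          fun i => ind ((D.pt e i).re = t) + ind ((D.pt e (i + 1)).re = t)]
    _ = ind ((D.pt e 0).re = t) + ind ((D.pt e (D.len e)).re = t) := by
        rw [Finset.sum_range_sub fun i => ind ((D.pt e i).re = t), CharTwo.sub_eq_add, add_comm]

theorem sum_ends_re_vtx (x : G.edgeSet → ZMod 2) (v : V) :
    ∑ s, x s.1 * (D.segmentGraph hre).ends s (D.vtx v).re = ∑ e, x e * ind (v ∈ e.1) := by
  have hvtx (u : V) : (D.vtx u).re = (D.vtx v).re ↔ u = v :=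
    (hre.eq_iff (D.vtx_mem_nodes u) (D.vtx_mem_nodes v)).trans D.vtx_inj.eq_iff
  simp only [sum_ends, hvtx, D.ind_mem_edge]

theorem _root_.IsEvenChain.sum_ends {x : G.edgeSet → ZMod 2} (hx : IsEvenChain G x) (t : ℝ) :
    ∑ s, x s.1 * (D.segmentGraph hre).ends s t = 0 := by
  by_cases h : ∃ v, (D.vtx v).re = t
  · obtain ⟨v, rfl⟩ := h
    rw [sum_ends_re_vtx, hx]
  · push Not at h
    simp only [D.sum_ends hre, ind_false (h _), add_zero, mul_zero, Finset.sum_const_zero]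

end Chains

section Sides

variable [Finite V] [Finite G.edgeSet] (hre : D.nodes.InjOn Complex.re)

theorem pt_succ_mem_seg_iff (e : G.edgeSet) {i : ℕ} (hi : i + 1 < D.len e)
    (s : Σ e : G.edgeSet, Fin (D.len e)) : D.pt e (i + 1) ∈ (D.segmentGraph hre).seg s ↔
      s = ⟨e, i, Nat.lt_of_succ_lt hi⟩ ∨ s = ⟨e, i + 1, hi⟩ := by
  constructor
  · intro h
    obtain ⟨e', j, hj⟩ := s
    obtain rfl : e = e' := by
      by_contra he
      have hend := D.eq_zero_or_eq_len_of_pt_mem_range hi.le <|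
        D.inter e e' he ⟨mem_polyline (D.len_pos e) hi.le, segment_subset_polyline hj h⟩
      lia
    rcases (D.isSimplePolyline e).eq_or_eq_of_mem hj hi.le h with rfl | h
    · exact Or.inr rfl
    · obtain rfl := Nat.succ_injective h
      exact Or.inl rfl
  · rintro (rfl | rfl)
    · exact right_mem_segment ..
    · exact left_mem_segment ..

theorem exists_vtx_mem_seg {v : V} {e : G.edgeSet} (hv : v ∈ e.1) :
    ∃ i, D.vtx v ∈ (D.segmentGraph hre).seg ⟨e, i⟩ := by
  rcases D.mem_edge_iff.1 hv with rfl | rfl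
  · rw [← D.pt_zero]
    exact ⟨⟨0, D.len_pos e⟩, left_mem_segment ..⟩
  · have hlen : D.len e - 1 + 1 = D.len e := Nat.sub_add_cancel (D.len_pos e)
    refine ⟨⟨D.len e - 1, Nat.sub_one_lt_of_lt (D.len_pos e)⟩, ?_⟩
    rw [← D.pt_len]
    exact (congrArg (D.pt e) hlen) ▸ right_mem_segment ..

theorem exists_face_vtx_mem_closure (v : V) :
    ∃ f ∈ (D.segmentGraph hre).faces, D.vtx v ∈ closure f := by
  set Γ := D.segmentGraph hre
  have h : D.vtx v ∈ closure (⋃ f ∈ Γ.faces, f) := by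
    refine closure_mono (fun z hz => ?_) (Γ.dense_compl_support (D.vtx v))
    exact Set.mem_biUnion ⟨z, hz, rfl⟩ (Γ.mem_face hz)
  rw [Γ.finite_faces.closure_biUnion] at h
  obtain ⟨f, hf, hvf⟩ := Set.mem_iUnion₂.1 h
  exact ⟨f, hf, hvf⟩

theorem jump_eq (ψ : Set ℂ → ZMod 2) (e : G.edgeSet) (i : ℕ) (hi : i < D.len e) :
    (D.segmentGraph hre).jump ψ ⟨e, i, hi⟩ =
      (D.segmentGraph hre).jump ψ ⟨e, 0, D.len_pos e⟩ := by
  induction i with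
  | zero => rfl
  | succ i ih =>
    rw [← ih (Nat.lt_of_succ_lt hi)]
    exact ((D.segmentGraph hre).jump_eq_of_node (D.pt_mem_nodes e hi.le) (by simp)
      (D.pt_succ_mem_seg_iff hre e hi) ψ).symm

theorem sides_eq (e : G.edgeSet) (i : ℕ) (hi : i < D.len e) :
    (D.segmentGraph hre).sides ⟨e, i, hi⟩ = (D.segmentGraph hre).sides ⟨e, 0, D.len_pos e⟩ := by
  induction i with
  | zero => rfl
  | succ i ih =>
    rw [← ih (Nat.lt_of_succ_lt hi)]
    exact ((D.segmentGraph hre).sides_eq_of_node (D.pt_mem_nodes e hi.le) (by simp)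
      (D.pt_succ_mem_seg_iff hre e hi)).symm

theorem vtx_mem_closure_of_mem_sides {e : G.edgeSet} {f : Set ℂ}
    (hf : f ∈ (D.segmentGraph hre).sides ⟨e, 0, D.len_pos e⟩) {v : V} (hv : v ∈ e.1) :
    D.vtx v ∈ closure f := by
  obtain ⟨i, hi⟩ := D.exists_vtx_mem_seg hre hv
  rw [← D.sides_eq hre e i i.2] at hf
  exact (D.segmentGraph hre).seg_subset_closure_of_mem_sides hf hi

theorem eq_of_forall_jump_eq_zero {ψ : Set ℂ → ZMod 2}
    (h : ∀ e, (D.segmentGraph hre).jump ψ ⟨e, 0, D.len_pos e⟩ = 0) {f g : Set ℂ}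
    (hf : f ∈ (D.segmentGraph hre).faces) (hg : g ∈ (D.segmentGraph hre).faces) : ψ f = ψ g := by
  refine (D.segmentGraph hre).eq_of_no_jump_univ ψ (fun ⟨e, i, hi⟩ => ?_) hf hg
  exact CharTwo.add_eq_zero.1 ((D.jump_eq hre ψ e i hi).trans (h e))

end Sides

section Faces

variable [Finite V] [Fintype G.edgeSet] (hre : D.nodes.InjOn Complex.re)

theorem isEvenChain_jump (ψ : Set ℂ → ZMod 2) :
    IsEvenChain G fun e => (D.segmentGraph hre).jump ψ ⟨e, 0, D.len_pos e⟩ := by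
  intro v
  rw [← D.sum_ends_re_vtx hre, ← (D.segmentGraph hre).sum_jump_ends ψ (D.vtx v).re]
  exact Finset.sum_congr rfl fun ⟨e, i, hi⟩ _ => by rw [D.jump_eq hre ψ e i hi]

/-- The faces of a polygonal drawing as a system of faces: the sides of an edge are those of its
first segment, and a vertex is incident to a face if it belongs to the closure of the face. -/
noncomputable def faceSystem : FaceSystem G (D.segmentGraph hre).faces where
  left e := ⟨_, (D.segmentGraph hre).upper_mem_faces ⟨e, 0, D.len_pos e⟩⟩
  right e := ⟨_, (D.segmentGraph hre).lower_mem_faces ⟨e, 0, D.len_pos e⟩⟩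
  inc v f := D.vtx v ∈ closure f.1
  const_of_no_jump φ h f g := by
    have hψ := Subtype.val_injective.extend_apply φ 0
    rw [← hψ f, ← hψ g]
    refine D.eq_of_forall_jump_eq_zero hre (fun e => CharTwo.add_eq_zero.2 ?_) f.2 g.2
    simpa only [← hψ] using h e
  exists_potential x hx := by
    obtain ⟨φ, hjump, hconst⟩ := (D.segmentGraph hre).exists_potential (hx.sum_ends D hre)
    refine ⟨fun f => φ f.1, fun e => hjump _, fun v hv f g hf hg => ?_⟩
    exact hconst (D.vtx v) (fun s hs => hv _ (D.mem_of_vtx_mem _ _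
      (segment_subset_polyline s.2.2 hs))) _ f.2 _ g.2 hf hg
  isEvenChain_sum_sides φ := by
    simp only [← Subtype.val_injective.extend_apply φ 0]
    exact D.isEvenChain_jump hre _
  inc_left v e hv := D.vtx_mem_closure_of_mem_sides hre (Or.inl rfl) hv
  inc_right v e hv := D.vtx_mem_closure_of_mem_sides hre (Or.inr rfl) hv
  exists_inc v := by
    obtain ⟨f, hf, hvf⟩ := D.exists_face_vtx_mem_closure hre v
    exact ⟨⟨f, hf⟩, hvf⟩

end Faces

/-- The restriction of a drawing to a subgraph. -/
def restrict {H : SimpleGraph V} (h : H ≤ G) : PolyDrawing H where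
  vtx := D.vtx
  src e := D.src ⟨e.1, edgeSet_mono h e.2⟩
  tgt e := D.tgt ⟨e.1, edgeSet_mono h e.2⟩
  len e := D.len ⟨e.1, edgeSet_mono h e.2⟩
  pt e := D.pt ⟨e.1, edgeSet_mono h e.2⟩
  mk_eq _ := D.mk_eq _
  vtx_inj := D.vtx_inj
  pt_zero _ := D.pt_zero _
  pt_len _ := D.pt_len _
  isSimplePolyline _ := D.isSimplePolyline _
  inter _ _ he := D.inter _ _ fun heq => he (Subtype.ext (Subtype.mk.inj heq))
  mem_of_vtx_mem _ := D.mem_of_vtx_mem _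

theorem nodes_restrict_subset {H : SimpleGraph V} (h : H ≤ G) :
    (D.restrict h).nodes ⊆ D.nodes :=
  Set.union_subset_union_right _ <| Set.iUnion_subset fun e =>
    Set.subset_iUnion (fun e => D.pt e '' Set.Iic (D.len e)) ⟨e.1, edgeSet_mono h e.2⟩

theorem support_restrict_subset [Finite V] [Finite G.edgeSet] {H : SimpleGraph V}
    [Finite H.edgeSet] (h : H ≤ G) (hre : D.nodes.InjOn Complex.re) :
    ((D.restrict h).segmentGraph (hre.mono (D.nodes_restrict_subset h))).support ⊆
      (D.segmentGraph hre).support :=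
  Set.union_subset_union (D.nodes_restrict_subset h) <| Set.iUnion_subset fun ⟨e, i⟩ =>
    Set.subset_iUnion (D.segmentGraph hre).seg ⟨⟨e.1, edgeSet_mono h e.2⟩, i⟩

-- The clique alone is drawn as a complete graph on four vertices, and its faces are larger.
theorem card_le_three_of_isClique [Finite V] [Fintype G.edgeSet] (hre : D.nodes.InjOn Complex.re)
    (f : (D.segmentGraph hre).faces) {t : Finset V} (ht : G.IsClique t)
    (hinc : ∀ v ∈ t, (D.faceSystem hre).inc v f) : t.card ≤ 3 := by
  classical
  by_contra! hcard
  obtain ⟨t', htt, ht'⟩ := Finset.exists_subset_card_eq (Nat.succ_le_of_lt hcard)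
  let H : SimpleGraph V := SimpleGraph.fromRel fun a b => a ∈ t' ∧ b ∈ t'
  have hH (a b : V) : H.Adj a b ↔ a ≠ b ∧ a ∈ t' ∧ b ∈ t' := by
    simp only [H, fromRel_adj, and_comm, or_self]
  have hHG : H ≤ G := fun a b h => by
    obtain ⟨hab, ha, hb⟩ := (hH a b).1 h
    exact ht (htt ha) (htt hb) hab
  have : Fintype H.edgeSet := Fintype.ofInjective _ (Set.inclusion_injective (edgeSet_mono hHG))
  have hre' := hre.mono (D.nodes_restrict_subset hHG)
  have hsub := D.support_restrict_subset hHG hre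
  obtain ⟨_, z, hz, rfl⟩ := f
  obtain ⟨v, hv, hvf⟩ := ((D.restrict hHG).faceSystem hre').exists_not_inc ht' hH
    ⟨_, z, fun h => hz (hsub h), rfl⟩
  exact hvf (closure_mono (connectedComponentIn_mono _ (Set.compl_subset_compl.2 hsub))
    (hinc v (htt hv)))

end PolyDrawing

/-! ### Plane embeddings and polygonal drawings -/

theorem nonempty_polyDrawing_of_tubes {G : SimpleGraph V} {vtx : V → ℂ} (hinj : Injective vtx)
    (S : G.edgeSet → Set ℂ)
    (hS : ∀ u v (h : G.Adj u v), (visibilityGraph (S ⟨s(u, v), h⟩)).Reachable (vtx u) (vtx v))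
    (hinter : ∀ e e', e ≠ e' → S e ∩ S e' ⊆ Set.range vtx)
    (hvtx : ∀ e v, vtx v ∈ S e → v ∈ e.1) : Nonempty (PolyDrawing G) := by
  have hline (e : G.edgeSet) : ∃ u v k p, s(u, v) = e.1 ∧ IsSimplePolyline k p ∧ p 0 = vtx u ∧
      p k = vtx v ∧ polyline k p ⊆ S e := by
    obtain ⟨⟨u, v⟩, h⟩ := e
    obtain ⟨k, p, hp⟩ := exists_isSimplePolyline (hS u v h)
    exact ⟨u, v, k, p, rfl, hp⟩
  choose src tgt len pt hmk hsimple hzero hlen hsub using hline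
  exact ⟨{
    vtx, src, tgt, len, pt
    mk_eq := hmk
    vtx_inj := hinj
    pt_zero := hzero
    pt_len := hlen
    isSimplePolyline := hsimple
    inter := fun e e' he => (Set.inter_subset_inter (hsub e) (hsub e')).trans
      (hinter e e' he)
    mem_of_vtx_mem := fun e v hv => hvtx e v (hsub e hv) }⟩

namespace PolyDrawing

variable {G : SimpleGraph V} (D : PolyDrawing G)

/-- The polygonal line which represents an edge; it is empty for pairs which are not edges. -/
noncomputable def curve (e : Sym2 V) : Set ℂ := by
  classical exact if h : e ∈ G.edgeSet then polyline (D.len ⟨e, h⟩) (D.pt ⟨e, h⟩) else ∅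

theorem curve_coe (e : G.edgeSet) : D.curve e = polyline (D.len e) (D.pt e) :=
  dif_pos e.2

theorem isArc_curve {u v : V} (h : G.Adj u v) : IsArc (D.curve s(u, v)) (D.vtx u) (D.vtx v) := by
  let e : G.edgeSet := ⟨s(u, v), h⟩
  have harc := (D.isSimplePolyline e).isArc (D.len_pos e)
  rw [D.pt_zero, D.pt_len, ← D.curve_coe] at harc
  rcases Sym2.eq_iff.1 (D.mk_eq e) with ⟨hu, hv⟩ | ⟨hv, hu⟩
  · rwa [hu, hv] at harc
  · rw [hu, hv] at harc
    exact harc.symm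

theorem reachable_curve {u v : V} (h : G.Adj u v) :
    (visibilityGraph (D.curve s(u, v))).Reachable (D.vtx u) (D.vtx v) := by
  let e : G.edgeSet := ⟨s(u, v), h⟩
  have hreach := reachable_polyline (k := D.len e) (p := D.pt e)
  rw [D.pt_zero, D.pt_len, ← D.curve_coe] at hreach
  rcases Sym2.eq_iff.1 (D.mk_eq e) with ⟨hu, hv⟩ | ⟨hv, hu⟩
  · rwa [hu, hv] at hreach
  · rw [hu, hv] at hreach
    exact hreach.symm

theorem mem_of_vtx_mem_curve {e : Sym2 V} (he : e ∈ G.edgeSet) {v : V} (h : D.vtx v ∈ D.curve e) :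
    v ∈ e :=
  D.mem_of_vtx_mem ⟨e, he⟩ v (D.curve_coe ⟨e, he⟩ ▸ h)

theorem curve_inter_subset {e e' : Sym2 V} (he : e ∈ G.edgeSet) (he' : e' ∈ G.edgeSet)
    (hne : e ≠ e') : D.curve e ∩ D.curve e' ⊆ Set.range D.vtx := by
  rw [D.curve_coe ⟨e, he⟩, D.curve_coe ⟨e', he'⟩]
  exact D.inter _ _ fun h => hne (Subtype.mk.inj h)

theorem curve_subset_support [Finite V] [Finite G.edgeSet] (hre : D.nodes.InjOn Complex.re)
    {e : Sym2 V} (he : e ∈ G.edgeSet) : D.curve e ⊆ (D.segmentGraph hre).support := by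
  rw [D.curve_coe ⟨e, he⟩]
  exact Set.iUnion₂_subset fun i hi => (D.segmentGraph hre).seg_subset_support ⟨⟨e, he⟩, i, hi⟩

theorem planarGraph (D : PolyDrawing G) : PlanarGraph G := by
  refine ⟨{
    vtx := D.vtx
    arc := fun u v => D.curve s(u, v)
    vtx_inj := D.vtx_inj
    arc_symm := fun u v => by rw [Sym2.eq_swap]
    arc_curve := fun u v h => (D.isArc_curve h).exists_continuousOn
    arc_inter := ?_
    arc_vtx := fun u v h w hw => Sym2.mem_iff.1 (D.mem_of_vtx_mem_curve h hw) }⟩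
  rintro u v x y huv hxy hne z ⟨hz, hz'⟩
  obtain ⟨w, rfl⟩ := D.curve_inter_subset huv hxy hne ⟨hz, hz'⟩
  have hw := Sym2.mem_iff.1 (D.mem_of_vtx_mem_curve huv hz)
  have hw' := Sym2.mem_iff.1 (D.mem_of_vtx_mem_curve hxy hz')
  exact ⟨hw.imp (congrArg _) (congrArg _), hw'.imp (congrArg _) (congrArg _)⟩

end PolyDrawing

/-! ### Adding an edge inside a face -/

theorem reachable_of_isPreconnected {E : Type*} [NormedAddCommGroup E] [NormedSpace ℝ E]
    {K S : Set E} (hK : IsPreconnected K) (h : ∀ x ∈ K, ∀ᶠ y in 𝓝[K] x, segment ℝ x y ⊆ S)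
    {a b : E} (ha : a ∈ K) (hb : b ∈ K) : (visibilityGraph S).Reachable a b :=
  hK.induction₂ (visibilityGraph S).Reachable
    (fun x hx => (h x hx).mono fun _ => reachable_of_segment_subset)
    (fun _ _ _ _ _ _ => .trans) (fun _ _ _ _ => .symm) ha hb

theorem reachable_of_isOpen {E : Type*} [NormedAddCommGroup E] [NormedSpace ℝ E] {U : Set E}
    (hU : IsOpen U) (hc : IsPreconnected U) {a b : E} (ha : a ∈ U) (hb : b ∈ U) :
    (visibilityGraph U).Reachable a b := by
  refine reachable_of_isPreconnected hc (fun x hx => ?_) ha hb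
  obtain ⟨r, hr, hsub⟩ := Metric.isOpen_iff.1 hU x hx
  filter_upwards [nhdsWithin_le_nhds (Metric.ball_mem_nhds x hr)] with y hy
  exact ((convex_ball x r).segment_subset (Metric.mem_ball_self hr) hy).trans hsub

namespace SegmentGraph

variable {S : Type*} (Γ : SegmentGraph S)

theorem isOpen_of_mem_faces [Finite S] {f : Set ℂ} (hf : f ∈ Γ.faces) : IsOpen f := by
  obtain ⟨z, -, rfl⟩ := hf
  exact Γ.isCompact_support.isClosed.isOpen_compl.connectedComponentIn

theorem isPreconnected_of_mem_faces {f : Set ℂ} (hf : f ∈ Γ.faces) : IsPreconnected f := by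
  obtain ⟨z, -, rfl⟩ := hf
  exact isPreconnected_connectedComponentIn

theorem disjoint_support_of_mem_faces {f : Set ℂ} (hf : f ∈ Γ.faces) : Disjoint f Γ.support := by
  obtain ⟨z, -, rfl⟩ := hf
  exact Set.disjoint_left.2 fun x hx => Γ.face_subset z hx

theorem reachable_insert_insert [Finite S] {f : Set ℂ} (hf : f ∈ Γ.faces) {u w : ℂ}
    (hu : u ∈ Γ.nodes) (hw : w ∈ Γ.nodes) (huf : u ∈ closure f) (hwf : w ∈ closure f) :
    (visibilityGraph (insert u (insert w f))).Reachable u w := by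
  obtain ⟨p, hp, hup⟩ := Γ.exists_segment_subset_insert hu hf huf
  obtain ⟨q, hq, hwq⟩ := Γ.exists_segment_subset_insert hw hf hwf
  have hpq := reachable_of_isOpen (Γ.isOpen_of_mem_faces hf) (Γ.isPreconnected_of_mem_faces hf)
    hp hq
  have hw_sub : insert w f ⊆ insert u (insert w f) := Set.subset_insert _ _
  have hf_sub : f ⊆ insert u (insert w f) := (Set.subset_insert _ _).trans hw_sub
  exact (reachable_of_segment_subset
      (hup.trans (Set.insert_subset_insert (Set.subset_insert _ _)))).trans <|
    (hpq.mono (visibilityGraph_mono hf_sub)).trans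
      (reachable_of_segment_subset (hwq.trans hw_sub)).symm

end SegmentGraph

namespace PolyDrawing

variable {G : SimpleGraph V} (D : PolyDrawing G)

theorem planarGraph_sup_of_tube {u w : V} (huw : ¬ G.Adj u w) {N : Set ℂ}
    (hN : (visibilityGraph N).Reachable (D.vtx u) (D.vtx w))
    (hinter : ∀ e ∈ G.edgeSet, D.curve e ∩ N ⊆ Set.range D.vtx)
    (hvtx : ∀ v, D.vtx v ∈ N → v ∈ s(u, w)) :
    PlanarGraph (G ⊔ fromEdgeSet {s(u, w)}) := by
  classical
  have hedge {e : Sym2 V} (he : e ∈ (G ⊔ fromEdgeSet {s(u, w)}).edgeSet) :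
      e ∈ G.edgeSet ∨ e = s(u, w) := by
    rw [edgeSet_sup, edgeSet_fromEdgeSet] at he
    exact he.imp_right And.left
  let S := Function.update D.curve s(u, w) N
  have hSN : S s(u, w) = N := Function.update_self ..
  have hSG {e : Sym2 V} (he : e ∈ G.edgeSet) : S e = D.curve e :=
    Function.update_of_ne (by rintro rfl; exact huw he) ..
  obtain ⟨D'⟩ : Nonempty (PolyDrawing (G ⊔ fromEdgeSet {s(u, w)})) := by
    refine nonempty_polyDrawing_of_tubes D.vtx_inj (fun e => S e) (fun a b hab => ?_) ?_ ?_
    · rcases hedge ((mem_edgeSet _).2 hab) with h | h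
      · rw [hSG h]
        exact D.reachable_curve h
      · have hS : S s(a, b) = N := h ▸ hSN
        rw [hS]
        rcases Sym2.eq_iff.1 h with ⟨rfl, rfl⟩ | ⟨rfl, rfl⟩
        exacts [hN, hN.symm]
    · rintro ⟨e, he⟩ ⟨e', he'⟩ hne
      rcases hedge he with h | rfl <;> rcases hedge he' with h' | rfl
      · rw [hSG h, hSG h']
        exact D.curve_inter_subset h h' fun heq => hne (Subtype.ext heq)
      · rw [hSG h, hSN]
        exact hinter e h
      · rw [hSN, hSG h', Set.inter_comm]
        exact hinter e' h'
      · exact (hne rfl).elim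
    · rintro ⟨e, he⟩ v hv
      rcases hedge he with h | rfl
      · exact D.mem_of_vtx_mem_curve h (hSG h ▸ hv)
      · exact hvtx v (hSN ▸ hv)
  exact D'.planarGraph

theorem planarGraph_sup_of_mem_closure [Finite V] [Finite G.edgeSet]
    (hre : D.nodes.InjOn Complex.re) {f : Set ℂ} (hf : f ∈ (D.segmentGraph hre).faces) {u w : V}
    (huw : ¬ G.Adj u w) (hu : D.vtx u ∈ closure f) (hw : D.vtx w ∈ closure f) :
    PlanarGraph (G ⊔ fromEdgeSet {s(u, w)}) := by
  set Γ := D.segmentGraph hre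
  have hdisj := Set.disjoint_left.1 (Γ.disjoint_support_of_mem_faces hf)
  refine D.planarGraph_sup_of_tube huw
    (Γ.reachable_insert_insert hf (D.vtx_mem_nodes u) (D.vtx_mem_nodes w) hu hw) ?_ ?_
  · rintro e he z ⟨hz, rfl | rfl | hzf⟩
    · exact ⟨u, rfl⟩
    · exact ⟨w, rfl⟩
    · exact (hdisj hzf (D.curve_subset_support hre he hz)).elim
  · rintro v (h | h | h)
    · exact Sym2.mem_iff.2 (Or.inl (D.vtx_inj h))
    · exact Sym2.mem_iff.2 (Or.inr (D.vtx_inj h))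
    · exact (hdisj h (Or.inl (D.vtx_mem_nodes v))).elim

end PolyDrawing

theorem MaximalPlanar.isTriangular_faceSystem [Finite V] {G : SimpleGraph V} [Fintype G.edgeSet]
    (hG : MaximalPlanar G) (D : PolyDrawing G) (hre : D.nodes.InjOn Complex.re) :
    (D.faceSystem hre).IsTriangular := by
  have hadj f u w (hne : u ≠ w) (hu : (D.faceSystem hre).inc u f)
      (hw : (D.faceSystem hre).inc w f) : G.Adj u w := by
    by_contra huw
    exact hG.2 u w hne huw (D.planarGraph_sup_of_mem_closure hre f.2 huw hu hw)
  exact ⟨hadj, fun f t ht => D.card_le_three_of_isClique hre f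
    (fun u hu w hw hne => hadj f u w hne (ht u hu) (ht w hw)) ht⟩

/-! ### Every plane embedding can be made polygonal -/

theorem exists_last_le {α β : Type*} [ConditionallyCompleteLinearOrder α] [TopologicalSpace α]
    [OrderTopology α] [DenselyOrdered α] [LinearOrder β] [TopologicalSpace β]
    [OrderClosedTopology β] {f : α → β} {a b : α} (hab : a ≤ b)
    (hf : ContinuousOn f (Set.Icc a b)) {r : β} (ha : f a ≤ r) (hb : r ≤ f b) :
    ∃ s ∈ Set.Icc a b, f s = r ∧ ∀ t ∈ Set.Icc a b, f t ≤ r → t ≤ s := by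
  have hcompact : IsCompact (Set.Icc a b ∩ f ⁻¹' Set.Iic r) :=
    isCompact_Icc.of_isClosed_subset (hf.preimage_isClosed_of_isClosed isClosed_Icc isClosed_Iic)
      Set.inter_subset_left
  obtain ⟨s, ⟨hs, hsr⟩, hmax⟩ :=
    hcompact.exists_isGreatest ⟨a, Set.left_mem_Icc.2 hab, ha⟩
  obtain ⟨t, ht, htr⟩ := intermediate_value_Icc hs.2
    (hf.mono (Set.Icc_subset_Icc_left hs.1)) ⟨hsr, hb⟩
  have hts : t ≤ s := hmax ⟨⟨hs.1.trans ht.1, ht.2⟩, htr.le⟩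
  exact ⟨s, hs, le_antisymm hts ht.1 ▸ htr, fun t ht htr => hmax ⟨ht, htr⟩⟩

theorem exists_first_le {α β : Type*} [ConditionallyCompleteLinearOrder α] [TopologicalSpace α]
    [OrderTopology α] [DenselyOrdered α] [LinearOrder β] [TopologicalSpace β]
    [OrderClosedTopology β] {f : α → β} {a b : α} (hab : a ≤ b)
    (hf : ContinuousOn f (Set.Icc a b)) {r : β} (ha : r ≤ f a) (hb : f b ≤ r) :
    ∃ s ∈ Set.Icc a b, f s = r ∧ ∀ t ∈ Set.Icc a b, f t ≤ r → s ≤ t := by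
  obtain ⟨s, hs, hsr, hmin⟩ := exists_last_le (α := αᵒᵈ) (f := f ∘ OrderDual.ofDual)
    (OrderDual.toDual_le_toDual.2 hab) (by rwa [Set.Icc_toDual]) hb ha
  exact ⟨s, ⟨hs.2, hs.1⟩, hsr, fun t ht => hmin t ⟨ht.2, ht.1⟩⟩

theorem exists_subarc_between_balls {X : Type*} [PseudoMetricSpace X] {γ : ℝ → X}
    (hγ : ContinuousOn γ (Set.Icc 0 1)) {R : ℝ} (hR : 0 ≤ R)
    (hdist : 2 * R ≤ dist (γ 0) (γ 1)) :
    ∃ K ⊆ γ '' Set.Icc 0 1, IsCompact K ∧ IsPreconnected K ∧ ∃ a ∈ K, ∃ b ∈ K,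
      dist a (γ 0) = R ∧ dist b (γ 1) = R ∧ (∀ z ∈ K, dist z (γ 0) ≤ R → z = a) ∧
        ∀ z ∈ K, dist z (γ 1) ≤ R → z = b := by
  have hcont (p : X) : ContinuousOn (fun t => dist (γ t) p) (Set.Icc 0 1) :=
    (continuous_id.dist continuous_const).comp_continuousOn hγ
  obtain ⟨s, hs, hsR, hlast⟩ := exists_last_le zero_le_one (hcont (γ 0)) (r := R)
    (by rwa [_root_.dist_self]) (by rw [_root_.dist_comm]; linarith)
  have hfar : R ≤ dist (γ s) (γ 1) := by
    linarith [dist_triangle_left (γ 0) (γ 1) (γ s)]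
  obtain ⟨t, ht, htR, hfirst⟩ := exists_first_le hs.2
    ((hcont (γ 1)).mono (Set.Icc_subset_Icc_left hs.1)) hfar (by rwa [_root_.dist_self])
  have hsub : Set.Icc s t ⊆ Set.Icc 0 1 := Set.Icc_subset_Icc hs.1 ht.2
  refine ⟨γ '' Set.Icc s t, Set.image_mono hsub, isCompact_Icc.image_of_continuousOn (hγ.mono hsub),
    isPreconnected_Icc.image _ (hγ.mono hsub), γ s, ⟨s, Set.left_mem_Icc.2 ht.1, rfl⟩, γ t,
    ⟨t, Set.right_mem_Icc.2 ht.1, rfl⟩, hsR, htR, ?_, ?_⟩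
  · rintro _ ⟨r, hr, rfl⟩ hrR
    rw [le_antisymm (hlast r (hsub hr) hrR) hr.1]
  · rintro _ ⟨r, hr, rfl⟩ hrR
    rw [le_antisymm hr.2 (hfirst r ⟨hr.1, hr.2.trans ht.2⟩ hrR)]

theorem eventually_disjoint_thickening {X : Type*} [PseudoEMetricSpace X] {K T : Set X}
    (hK : IsCompact K) (hT : IsClosed T) (h : Disjoint K T) :
    ∀ᶠ δ in 𝓝[>] (0 : ℝ), Disjoint (Metric.thickening δ K) (Metric.thickening δ T) := by
  obtain ⟨r, hr, hd⟩ := h.exists_thickenings hK hT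
  filter_upwards [Ioc_mem_nhdsGT hr] with δ hδ
  exact hd.mono (Metric.thickening_mono hδ.2 _) (Metric.thickening_mono hδ.2 _)

section Radii

variable {E : Type*} [NormedAddCommGroup E] [NormedSpace ℝ E] {p a b z : E}

theorem dist_le_of_mem_segment (hz : z ∈ segment ℝ p a) : dist z p ≤ dist a p := by
  rw [_root_.dist_comm a]
  exact segment_subset_closedBall_left p a hz

theorem eq_right_of_mem_segment (hz : z ∈ segment ℝ p a) (h : dist z p = dist a p) : z = a := by
  have hadd := dist_add_dist_of_mem_segment hz
  rw [_root_.dist_comm p z, _root_.dist_comm p a] at hadd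
  exact dist_eq_zero.1 (by linarith)

theorem eq_center_of_mem_radii (hab : dist a p = dist b p) (hne : a ≠ b)
    (hza : z ∈ segment ℝ p a) (hzb : z ∈ segment ℝ p b) : z = p := by
  by_contra hz
  rw [segment_symm] at hza
  rcases mem_segment_or_mem_segment_of_mem hza hzb hz with h | h
  · exact hne (eq_right_of_mem_segment h hab)
  · exact hne (eq_right_of_mem_segment (segment_symm ℝ a p ▸ h) hab.symm).symm

end Radii

namespace PlaneEmbedding

variable {G : SimpleGraph V} (E : PlaneEmbedding G)

/-- The arc which represents an edge. -/
def edgeArc : Sym2 V → Set ℂ := Sym2.lift ⟨E.arc, E.arc_symm⟩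

theorem isCompact_edgeArc (e : G.edgeSet) : IsCompact (E.edgeArc e) := by
  obtain ⟨⟨u, v⟩, huv⟩ := e
  obtain ⟨γ, hγ, -, -, -, harc⟩ := E.arc_curve (G.mem_edgeSet.1 huv)
  change IsCompact (E.arc u v)
  exact harc ▸ isCompact_Icc.image_of_continuousOn hγ

theorem mem_of_vtx_mem_edgeArc {e : G.edgeSet} {v : V} (hv : E.vtx v ∈ E.edgeArc e) :
    v ∈ e.1 := by
  obtain ⟨⟨a, b⟩, hab⟩ := e
  exact Sym2.mem_iff.2 (E.arc_vtx (G.mem_edgeSet.1 hab) v hv)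

theorem edgeArc_inter_subset {e e' : G.edgeSet} (hne : e ≠ e') :
    E.edgeArc e ∩ E.edgeArc e' ⊆ Set.range E.vtx := by
  obtain ⟨⟨a, b⟩, hab⟩ := e
  obtain ⟨⟨c, d⟩, hcd⟩ := e'
  intro z hz
  have hends := E.arc_inter (G.mem_edgeSet.1 hab) (G.mem_edgeSet.1 hcd)
    (fun h => hne (Subtype.ext h)) hz
  rcases hends.1 with rfl | rfl
  exacts [⟨a, rfl⟩, ⟨b, rfl⟩]

/-- The closed discs of radius `R` around the vertices are disjoint, and such a disc meets only
the arcs of the edges at its centre. -/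
structure IsSeparatingRadius (R : ℝ) : Prop where
  pos : 0 < R
  two_mul_lt_dist : ∀ v w, v ≠ w → 2 * R < dist (E.vtx v) (E.vtx w)
  lt_dist : ∀ e : G.edgeSet, ∀ v ∉ e.1, ∀ z ∈ E.edgeArc e, R < dist z (E.vtx v)

theorem exists_isSeparatingRadius [Finite V] : ∃ R, E.IsSeparatingRadius R := by
  have hvtx : ∀ᶠ R in 𝓝[>] (0 : ℝ), ∀ v w, v ≠ w → 2 * R < dist (E.vtx v) (E.vtx w) := by
    simp only [eventually_all]
    intro v w hne
    filter_upwards [Ioo_mem_nhdsGT (half_pos (dist_pos.2 (E.vtx_inj.ne hne)))] with R hR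
    linarith [hR.2]
  have hedge : ∀ᶠ R in 𝓝[>] (0 : ℝ), ∀ e : G.edgeSet, ∀ v ∉ e.1, ∀ z ∈ E.edgeArc e,
      R < dist z (E.vtx v) := by
    simp only [eventually_all]
    intro e v hv
    have hd : Disjoint (E.edgeArc e) {E.vtx v} :=
      Set.disjoint_singleton_right.2 fun h => hv (E.mem_of_vtx_mem_edgeArc h)
    obtain ⟨r, hr, hdisj⟩ := hd.exists_thickenings (E.isCompact_edgeArc e) isClosed_singleton
    filter_upwards [Ioo_mem_nhdsGT hr] with R hR z hz
    by_contra! hle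
    exact Set.disjoint_left.1 hdisj (Metric.self_subset_thickening hr _ hz)
      (Metric.mem_thickening_iff.2 ⟨_, rfl, hle.trans_lt hR.2⟩)
  obtain ⟨R, ⟨hvtx, hedge⟩, hpos⟩ := ((hvtx.and hedge).and self_mem_nhdsWithin).exists
  exact ⟨R, hpos, hvtx, hedge⟩

/-- A truncation of the arcs of a plane embedding at the circles of radius `R` around the
vertices: `middle e` is a continuum on the arc of `e` outside the two discs at the ends of `e`,
and `port e v` is the only point of it on the circle around the end `v` of `e`. -/
structure Truncation (R : ℝ) where
  middle : G.edgeSet → Set ℂ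
  port : G.edgeSet → V → ℂ
  middle_subset : ∀ e, middle e ⊆ E.edgeArc e
  isCompact_middle : ∀ e, IsCompact (middle e)
  isPreconnected_middle : ∀ e, IsPreconnected (middle e)
  port_mem : ∀ e, ∀ v ∈ e.1, port e v ∈ middle e
  dist_port : ∀ e, ∀ v ∈ e.1, dist (port e v) (E.vtx v) = R
  eq_port : ∀ e, ∀ v ∈ e.1, ∀ z ∈ middle e, dist z (E.vtx v) ≤ R → z = port e v

variable {E} {R : ℝ}

theorem IsSeparatingRadius.nonempty_truncation (hR : E.IsSeparatingRadius R) :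
    Nonempty (E.Truncation R) := by
  classical
  have hmiddle (e : G.edgeSet) : ∃ (K : Set ℂ) (a : V → ℂ), K ⊆ E.edgeArc e ∧ IsCompact K ∧
      IsPreconnected K ∧ (∀ v ∈ e.1, a v ∈ K) ∧ (∀ v ∈ e.1, dist (a v) (E.vtx v) = R) ∧
        ∀ v ∈ e.1, ∀ z ∈ K, dist z (E.vtx v) ≤ R → z = a v := by
    obtain ⟨⟨u, v⟩, huv⟩ := e
    have hne : v ≠ u := (G.mem_edgeSet.1 huv).ne'
    obtain ⟨γ, hγ, -, hγu, hγv, harc⟩ := E.arc_curve (G.mem_edgeSet.1 huv)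
    obtain ⟨K, hK, hKc, hKp, a, ha, b, hb, hau, hbv, hKa, hKb⟩ := exists_subarc_between_balls hγ
      hR.pos.le (by rw [hγu, hγv]; exact (hR.two_mul_lt_dist u v hne.symm).le)
    rw [hγu] at hau hKa
    rw [hγv] at hbv hKb
    have hends {P : V → Prop} (hu : P u) (hv : P v) : ∀ w ∈ s(u, v), P w := fun w hw =>
      (Sym2.mem_iff.1 hw).elim (fun h => h ▸ hu) fun h => h ▸ hv
    refine ⟨K, fun w => if w = u then a else b, hK.trans harc.ge, hKc, hKp, hends ?_ ?_,
      hends ?_ ?_, hends ?_ ?_⟩ <;> simpa [hne]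
  choose middle port h using hmiddle
  exact ⟨⟨middle, port, fun e => (h e).1, fun e => (h e).2.1, fun e => (h e).2.2.1,
    fun e => (h e).2.2.2.1, fun e => (h e).2.2.2.2.1, fun e => (h e).2.2.2.2.2⟩⟩

namespace Truncation

variable (T : E.Truncation R)

/-- The two radii which join the ends of an edge to its truncated arc. -/
def radii (e : G.edgeSet) : Set ℂ :=
  {z | ∃ v ∈ e.1, z ∈ segment ℝ (E.vtx v) (T.port e v)}

/-- The two radii of an edge together with the `δ`-neighbourhood of its truncated arc. -/
def tube (δ : ℝ) (e : G.edgeSet) : Set ℂ := Metric.thickening δ (T.middle e) ∪ T.radii e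

theorem isClosed_radii [Finite V] (e : G.edgeSet) : IsClosed (T.radii e) := by
  have hunion : T.radii e = ⋃ v ∈ {v | v ∈ e.1}, segment ℝ (E.vtx v) (T.port e v) := by
    ext z
    simp [radii]
  rw [hunion]
  refine (Set.toFinite _).isClosed_biUnion fun v _ => ?_
  rw [← convexHull_pair]
  exact (Set.toFinite _).isClosed_convexHull ℝ

theorem dist_le_of_mem_radius {e : G.edgeSet} {v : V} (hv : v ∈ e.1) {z : ℂ}
    (hz : z ∈ segment ℝ (E.vtx v) (T.port e v)) : dist z (E.vtx v) ≤ R :=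
  (dist_le_of_mem_segment hz).trans_eq (T.dist_port e v hv)

variable {e e' : G.edgeSet}

theorem disjoint_middle (hR : 0 < R) (hne : e ≠ e') : Disjoint (T.middle e) (T.middle e') := by
  refine Set.disjoint_left.2 fun z hz hz' => ?_
  obtain ⟨v, rfl⟩ := E.edgeArc_inter_subset hne ⟨T.middle_subset e hz, T.middle_subset e' hz'⟩
  have hve := E.mem_of_vtx_mem_edgeArc (T.middle_subset e hz)
  have hport := T.eq_port e v hve _ hz (by simpa using hR.le)
  have hdist := T.dist_port e v hve
  rw [← hport, _root_.dist_self] at hdist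
  exact hR.ne hdist

theorem disjoint_middle_radii (hR : E.IsSeparatingRadius R) (hne : e ≠ e') :
    Disjoint (T.middle e) (T.radii e') := by
  refine Set.disjoint_left.2 fun z hz ⟨v, hv, hzv⟩ => ?_
  have hzR := T.dist_le_of_mem_radius hv hzv
  by_cases hve : v ∈ e.1
  · have hzport : z = T.port e' v := eq_right_of_mem_segment hzv <| by
      rw [T.eq_port e v hve z hz hzR, T.dist_port e v hve, T.dist_port e' v hv]
    exact Set.disjoint_left.1 (T.disjoint_middle hR.pos hne) hz (hzport ▸ T.port_mem e' v hv)
  · exact (hR.lt_dist e v hve z (T.middle_subset e hz)).not_ge hzR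

theorem radii_inter_subset (hR : E.IsSeparatingRadius R) (hne : e ≠ e') :
    T.radii e ∩ T.radii e' ⊆ Set.range E.vtx := by
  rintro z ⟨⟨v, hv, hz⟩, w, hw, hz'⟩
  obtain rfl : v = w := by
    by_contra hvw
    linarith [T.dist_le_of_mem_radius hv hz, T.dist_le_of_mem_radius hw hz',
      dist_triangle_left (E.vtx v) (E.vtx w) z, hR.two_mul_lt_dist v w hvw]
  refine ⟨v, (eq_center_of_mem_radii ?_ (fun h => ?_) hz hz').symm⟩
  · rw [T.dist_port e v hv, T.dist_port e' v hw]
  · exact Set.disjoint_left.1 (T.disjoint_middle hR.pos hne) (T.port_mem e v hv)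
      (h ▸ T.port_mem e' v hw)

theorem exists_disjoint_tube [Finite V] (hR : E.IsSeparatingRadius R) : ∃ δ > 0, δ ≤ R ∧
    ∀ e e', e ≠ e' → Disjoint (Metric.thickening δ (T.middle e)) (T.tube δ e') := by
  have hdisj : ∀ᶠ δ in 𝓝[>] (0 : ℝ), ∀ e e', e ≠ e' → Disjoint
      (Metric.thickening δ (T.middle e)) (Metric.thickening δ (T.middle e' ∪ T.radii e')) := by
    simp only [eventually_all]
    exact fun e e' hne => eventually_disjoint_thickening (T.isCompact_middle e)
      ((T.isCompact_middle e').isClosed.union (T.isClosed_radii e'))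
      ((T.disjoint_middle hR.pos hne).union_right (T.disjoint_middle_radii hR hne))
  obtain ⟨δ, hdisj, hδ, hδR⟩ := (hdisj.and (Ioc_mem_nhdsGT hR.pos)).exists
  refine ⟨δ, hδ, hδR, fun e e' hne => (hdisj e e' hne).mono_right ?_⟩
  rw [Metric.thickening_union]
  exact Set.union_subset_union_right _ (Metric.self_subset_thickening hδ _)

theorem reachable_tube {δ : ℝ} (hδ : 0 < δ) {u v : V} (h : G.Adj u v) :
    (visibilityGraph (T.tube δ ⟨s(u, v), h⟩)).Reachable (E.vtx u) (E.vtx v) := by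
  set e : G.edgeSet := ⟨s(u, v), h⟩
  have hu : u ∈ e.1 := Sym2.mem_mk_left u v
  have hv : v ∈ e.1 := Sym2.mem_mk_right u v
  have hradius {w : V} (hw : w ∈ e.1) :
      (visibilityGraph (T.tube δ e)).Reachable (E.vtx w) (T.port e w) :=
    reachable_of_segment_subset fun z hz => Or.inr ⟨w, hw, hz⟩
  have hmiddle : (visibilityGraph (T.tube δ e)).Reachable (T.port e u) (T.port e v) := by
    refine reachable_of_isPreconnected (T.isPreconnected_middle e) (fun x hx => ?_)
      (T.port_mem e u hu) (T.port_mem e v hv)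
    filter_upwards [nhdsWithin_le_nhds (Metric.ball_mem_nhds x hδ)] with y hy
    exact ((convex_ball x δ).segment_subset (Metric.mem_ball_self hδ) hy).trans
      ((Metric.ball_subset_thickening hx δ).trans Set.subset_union_left)
  exact ((hradius hu).trans hmiddle).trans (hradius hv).symm

theorem mem_of_vtx_mem_tube (hR : E.IsSeparatingRadius R) {δ : ℝ} (hδ : δ ≤ R) {w : V}
    (hw : E.vtx w ∈ T.tube δ e) : w ∈ e.1 := by
  by_contra hwe
  rcases hw with hw | ⟨v, hv, hw⟩
  · obtain ⟨z, hz, hzw⟩ := Metric.mem_thickening_iff.1 hw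
    rw [_root_.dist_comm] at hzw
    linarith [hR.lt_dist e w hwe z (T.middle_subset e hz)]
  · linarith [T.dist_le_of_mem_radius hv hw, hR.pos,
      hR.two_mul_lt_dist w v fun h => hwe (h ▸ hv)]

end Truncation

theorem nonempty_polyDrawing [Finite V] (E : PlaneEmbedding G) : Nonempty (PolyDrawing G) := by
  obtain ⟨R, hR⟩ := E.exists_isSeparatingRadius
  obtain ⟨T⟩ := hR.nonempty_truncation
  obtain ⟨δ, hδ, hδR, hdisj⟩ := T.exists_disjoint_tube hR
  refine nonempty_polyDrawing_of_tubes E.vtx_inj (T.tube δ) (fun u v => T.reachable_tube hδ) ?_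
    fun e v => T.mem_of_vtx_mem_tube hR hδR
  rintro e e' hne z ⟨hz | hz, hz'⟩
  · exact (Set.disjoint_left.1 (hdisj e e' hne) hz hz').elim
  rcases hz' with hz' | hz'
  · exact (Set.disjoint_left.1 (hdisj e' e hne.symm) hz' (Or.inr hz)).elim
  · exact T.radii_inter_subset hR hne ⟨hz, hz'⟩

end PlaneEmbedding

/-! ### General position -/

theorem segment_map {E F : Type*} [AddCommGroup E] [Module ℝ E] [AddCommGroup F] [Module ℝ F]
    (L : E →ₗ[ℝ] F) (x y : E) : segment ℝ (L x) (L y) = L '' segment ℝ x y :=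
  (image_segment ℝ L.toAffineMap x y).symm

theorem polyline_map {E F : Type*} [AddCommGroup E] [Module ℝ E] [AddCommGroup F] [Module ℝ F]
    (L : E →ₗ[ℝ] F) (k : ℕ) (p : ℕ → E) : polyline k (L ∘ p) = L '' polyline k p := by
  simp only [polyline, Function.comp_apply, segment_map, Set.image_iUnion]

theorem IsSimplePolyline.map {E F : Type*} [AddCommGroup E] [Module ℝ E] [AddCommGroup F]
    [Module ℝ F] {L : E →ₗ[ℝ] F} (hL : Injective L) {k : ℕ} {p : ℕ → E}
    (h : IsSimplePolyline k p) : IsSimplePolyline k (L ∘ p) where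
  injOn := hL.comp_injOn h.injOn
  inter i j hij hj z hz hz' := by
    simp only [Function.comp_apply, segment_map] at hz hz'
    obtain ⟨w, hw, rfl⟩ := hz
    exact (h.inter i j hij hj w hw ((hL.mem_set_image).1 hz')).imp_right (congrArg L)

namespace PolyDrawing

variable {G : SimpleGraph V} (D : PolyDrawing G)

/-- The image of a polygonal drawing under an injective linear map. -/
noncomputable def map (L : ℂ →ₗ[ℝ] ℂ) (hL : Injective L) : PolyDrawing G where
  vtx := L ∘ D.vtx
  src := D.src
  tgt := D.tgt
  len := D.len
  pt e := L ∘ D.pt e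
  mk_eq := D.mk_eq
  vtx_inj := hL.comp D.vtx_inj
  pt_zero e := congrArg L (D.pt_zero e)
  pt_len e := congrArg L (D.pt_len e)
  isSimplePolyline e := (D.isSimplePolyline e).map hL
  inter e e' he := by
    rw [polyline_map, polyline_map, ← Set.image_inter hL, Set.range_comp]
    exact Set.image_mono (D.inter e e' he)
  mem_of_vtx_mem e v h := by
    rw [polyline_map, Function.comp_apply, hL.mem_set_image] at h
    exact D.mem_of_vtx_mem e v h

theorem nodes_map (L : ℂ →ₗ[ℝ] ℂ) (hL : Injective L) : (D.map L hL).nodes = L '' D.nodes := by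
  simp only [nodes, map, Set.image_union, Set.range_comp, Set.image_iUnion, Set.image_comp]

end PolyDrawing

/-- The shear of the plane parallel to the real axis with slope `c`. -/
noncomputable def shear (c : ℝ) : ℂ →ₗ[ℝ] ℂ :=
  LinearMap.id + Complex.imLm.smulRight (c : ℂ)

theorem shear_re (c : ℝ) (z : ℂ) : (shear c z).re = z.re + z.im * c := by simp [shear]

theorem shear_im (c : ℝ) (z : ℂ) : (shear c z).im = z.im := by simp [shear]

theorem shear_injective (c : ℝ) : Injective (shear c) := by
  intro z w h
  have him : z.im = w.im := by rw [← shear_im c z, h, shear_im]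
  have hre := congrArg Complex.re h
  rw [shear_re, shear_re, him] at hre
  exact Complex.ext (add_right_cancel hre) him

theorem exists_shear_injOn_re {N : Set ℂ} (hN : N.Finite) :
    ∃ c, (shear c '' N).InjOn Complex.re := by
  obtain ⟨c, hc⟩ := ((hN.prod hN).image
    fun p : ℂ × ℂ => -(p.1.re - p.2.re) / (p.1.im - p.2.im)).infinite_compl.nonempty
  refine ⟨c, ?_⟩
  rintro _ ⟨z, hz, rfl⟩ _ ⟨w, hw, rfl⟩ h
  rw [shear_re, shear_re] at h
  by_cases him : z.im = w.im
  · rw [him] at h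
    rw [Complex.ext (add_right_cancel h) him]
  · refine (hc ⟨(z, w), ⟨hz, hw⟩, (div_eq_iff (sub_ne_zero.2 him)).2 ?_⟩).elim
    linarith

theorem PolyDrawing.exists_injOn_re [Finite V] {G : SimpleGraph V} (D : PolyDrawing G) :
    ∃ D' : PolyDrawing G, D'.nodes.InjOn Complex.re := by
  obtain ⟨c, hc⟩ := exists_shear_injOn_re D.finite_nodes
  exact ⟨D.map (shear c) (shear_injective c), D.nodes_map _ _ ▸ hc⟩

/-- If `G` is a planar triangulation on `n` vertices, then `τ(G) = n - 2`. -/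
theorem tau_eq_of_planar_triangulation (V : Type) [Fintype V] (G : SimpleGraph V)
    (hG : MaximalPlanar G) : tau G = Fintype.card V - 2 := by
  classical
  rcases le_or_gt 3 (Fintype.card V) with h3 | h3
  · obtain ⟨D⟩ := hG.1.some.nonempty_polyDrawing
    obtain ⟨D', hre⟩ := D.exists_injOn_re
    have := (D'.segmentGraph hre).finite_faces.to_subtype
    have := Fintype.ofFinite (D'.segmentGraph hre).faces
    exact (hG.isTriangular_faceSystem D' hre).tau_eq h3
  · rw [Nat.sub_eq_zero_of_le (by omega)]
    refine Nat.sInf_eq_zero.2 (Or.inl ⟨∅, ⟨by simp, fun t ht => ?_⟩, rfl⟩)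
    have := ht.card_eq ▸ t.card_le_univ
    omega
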